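/- arXiv:2105.02135 — 5 statements merged into one kernel-verified Lean document; each statement's English description precedes it below -/
import Mathlib

section
/- There exists a constant C depending only on γ and R_max such that for every k ∈ ℕ and every δ ∈ (0,1), with probability at least 1−δ over all samples ξ_{k,j}, one has max_{x∈X} |V̂_k^{up}(x) − V*(x)| ≤ C [ γ^k · max_{x∈X}|V̂_0^{up}(x) − V*(x)| + max_{x∈X}|V^π(x) − V*(x)| + √( log(|X||A|/δ) / M_1 ) ]. -/
open MeasureTheory

/-- One realization of the approximate UVIP iterates in the tabular case (no
interpolation): `V̂_{k+1}^up(x) = M₂⁻¹ Σ_{j=M₁+1}^{M₁+M₂} max_a { r^a(x) +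
γ ( V̂_k^up(ψ(x,a,ξ_{k,j})) - V^π(ψ(x,a,ξ_{k,j})) + M₁⁻¹ Σ_{ℓ<M₁} V^π(ψ(x,a,ξ_{k,ℓ})) ) }`,
where `ω k j` plays the role of the sample `ξ_{k,j}`. -/
noncomputable def tabIter {X A Ξ : Type} [Fintype A] [Nonempty A]
    (ψ : X → A → Ξ → X) (r : A → X → ℝ) (γ : ℝ) (Vpi : X → ℝ)
    (M1 M2 : ℕ) (V0 : X → ℝ) : ℕ → (ℕ → ℕ → Ξ) → X → ℝ
  | 0, _ => V0
  | k + 1, ω => fun x =>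
      (M2 : ℝ)⁻¹ * ∑ j ∈ Finset.Ico M1 (M1 + M2),
        ⨆ a : A, (r a x + γ * (tabIter ψ r γ Vpi M1 M2 V0 k ω (ψ x a (ω k j)) -
          Vpi (ψ x a (ω k j)) +
          (M1 : ℝ)⁻¹ * ∑ l ∈ Finset.range M1, Vpi (ψ x a (ω k l))))

/-- Extension of finitely many samples to an `ℕ × ℕ`-indexed family (arbitrary values
off the used index range). -/
noncomputable def extendSamples {Ξ : Type} [Nonempty Ξ] (k M : ℕ)
    (ω : Fin k → Fin M → Ξ) : ℕ → ℕ → Ξ := fun i j =>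
  if h : i < k ∧ j < M then ω ⟨i, h.1⟩ ⟨j, h.2⟩ else Classical.arbitrary Ξ

/-!
Comparing one update with the Bellman equation for `V*`, the error `‖V̂_{i+1} - V*‖` is at most
`γ` times the sum of `‖V̂_i - V*‖`, of `2‖V^π - V*‖` and of the deviation `t_i` of the empirical
means of `V^π` from their expectations. Hence `t_i` enters the final error with weight
`γ ^ (k - i)`, which allows it to grow linearly in `k - i`. With such room Hoeffding's inequality
bounds the failure probability of iteration `i` by `δ 2^{-(k - i)}`, so the union bound over the
iterations costs nothing in `k`.
-/

section RealEstimates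

lemma abs_ciSup_sub_ciSup_le {ι : Type*} [Finite ι] [Nonempty ι] {f g : ι → ℝ} {c : ℝ}
    (h : ∀ i, |f i - g i| ≤ c) : |(⨆ i, f i) - ⨆ i, g i| ≤ c := by
  have iSup_le_iSup_add {f g : ι → ℝ} (hle : ∀ i, f i ≤ g i + c) :
      ⨆ i, f i ≤ (⨆ i, g i) + c :=
    ciSup_le fun i => (hle i).trans (by gcongr; exact le_ciSup (Set.finite_range g).bddAbove i)
  rw [abs_sub_le_iff, sub_le_iff_le_add', sub_le_iff_le_add']
  constructor <;> refine iSup_le_iSup_add fun i => ?_ <;> linarith [abs_sub_le_iff.1 (h i)]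

lemma abs_inv_card_mul_sum_sub_le {ι : Type*} {s : Finset ι} (hs : s.Nonempty) {f : ι → ℝ}
    {c ε : ℝ} (h : ∀ i ∈ s, |f i - c| ≤ ε) : |(s.card : ℝ)⁻¹ * ∑ i ∈ s, f i - c| ≤ ε := by
  have hcard : (0 : ℝ) < s.card := by exact_mod_cast hs.card_pos
  have hmean : (s.card : ℝ)⁻¹ * ∑ i ∈ s, f i - c = (s.card : ℝ)⁻¹ * ∑ i ∈ s, (f i - c) := by
    rw [Finset.sum_sub_distrib, Finset.sum_const, nsmul_eq_mul]
    field_simp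
  rw [hmean, abs_mul, abs_of_pos (inv_pos.2 hcard), inv_mul_le_iff₀ hcard, ← nsmul_eq_mul]
  exact (Finset.abs_sum_le_sum_abs _ _).trans (Finset.sum_le_card_nsmul _ _ _ h)

lemma pi_norm_eq_iSup_abs {ι : Type*} [Fintype ι] [Nonempty ι] (f : ι → ℝ) :
    ‖f‖ = ⨆ i, |f i| :=
  le_antisymm
    ((pi_norm_le_iff_of_nonempty f).2 fun i =>
      le_ciSup (f := fun i => |f i|) (Set.finite_range _).bddAbove i)
    (ciSup_le fun i => norm_le_pi_norm f i)

lemma le_pow_mul_add_sum_of_le_mul_add {γ : ℝ} (hγ : 0 ≤ γ) {u b : ℕ → ℝ} {k : ℕ}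
    (h : ∀ i < k, u (i + 1) ≤ γ * (u i + b i)) :
    u k ≤ γ ^ k * u 0 + ∑ i ∈ Finset.range k, γ ^ (k - i) * b i := by
  induction k with
  | zero => simp
  | succ k ih =>
    have hshift : ∀ i ∈ Finset.range k, γ ^ (k + 1 - i) * b i = γ * (γ ^ (k - i) * b i) := by
      intro i hi
      rw [Nat.succ_sub (Finset.mem_range.1 hi).le, pow_succ']
      ring
    calc u (k + 1) ≤ γ * (u k + b k) := h k k.lt_succ_self
      _ ≤ γ * (γ ^ k * u 0 + ∑ i ∈ Finset.range k, γ ^ (k - i) * b i + b k) := by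
          gcongr
          exact ih fun i hi => h i (hi.trans k.lt_succ_self)
      _ = γ ^ (k + 1) * u 0 + ∑ i ∈ Finset.range (k + 1), γ ^ (k + 1 - i) * b i := by
          rw [Finset.sum_range_succ, Finset.sum_congr rfl hshift, ← Finset.mul_sum,
            Nat.add_sub_cancel_left]
          ring

lemma sum_range_tsub_le_of_hasSum {g : ℕ → ℝ} {S : ℝ} (hg : ∀ n, 0 ≤ g n) (hS : HasSum g S)
    (k : ℕ) : ∑ i ∈ Finset.range k, g (k - i) ≤ S - g 0 := by
  have hflip := Finset.sum_flip g (n := k)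
  rw [Finset.sum_range_succ, Nat.sub_self] at hflip
  linarith [sum_le_hasSum (Finset.range (k + 1)) (fun n _ => hg n) hS]

lemma sum_range_pow_tsub_mul_tsub_add_one_le {γ : ℝ} (hγ0 : 0 ≤ γ) (hγ1 : γ < 1) (k : ℕ) :
    ∑ i ∈ Finset.range k, γ ^ (k - i) * (((k - i : ℕ) : ℝ) + 1) ≤ 1 / (1 - γ) ^ 2 := by
  have hasSum_pow_mul_add_one : HasSum (fun n : ℕ => γ ^ n * ((n : ℝ) + 1)) (1 / (1 - γ) ^ 2) := by
    have hnorm : ‖γ‖ < 1 := by rwa [Real.norm_of_nonneg hγ0]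
    simpa [mul_comm] using hasSum_choose_mul_geometric_of_norm_lt_one 1 hnorm
  have := sum_range_tsub_le_of_hasSum (fun n => by positivity) hasSum_pow_mul_add_one k
  simp only [pow_zero, Nat.cast_zero, zero_add, one_mul] at this
  linarith

lemma two_mul_pow_le_mul_half_pow {q : ℝ} (hq0 : 0 ≤ q) (hq : q ≤ 1 / 2) (m : ℕ) :
    2 * q ^ (2 * (m + 1) ^ 2) ≤ q * (1 / 2) ^ m := by
  calc 2 * q ^ (2 * (m + 1) ^ 2) ≤ 2 * q ^ (m + 2) := by
        gcongr 2 * ?_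
        exact pow_le_pow_of_le_one hq0 (by linarith) (by nlinarith)
    _ = q * (2 * q * q ^ m) := by ring
    _ ≤ q * (1 * (1 / 2) ^ m) := by gcongr; linarith
    _ = q * (1 / 2) ^ m := by rw [one_mul]

end RealEstimates

section Concentration

open ProbabilityTheory

variable {Ω Ξ : Type*} [MeasurableSpace Ω] [MeasurableSpace Ξ]

lemma measureReal_abs_ge_le_of_hasSubgaussianMGF {μ : Measure Ω} {Y : Ω → ℝ} {c : NNReal}
    (hY : HasSubgaussianMGF Y c μ) {ε : ℝ} (hε : 0 ≤ ε) :
    μ.real {ω | ε ≤ |Y ω|} ≤ 2 * Real.exp (-ε ^ 2 / (2 * c)) := by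
  have hunion : {ω | ε ≤ |Y ω|} = {ω | ε ≤ Y ω} ∪ {ω | ε ≤ (-Y) ω} := by
    ext ω
    exact le_abs (a := ε) (b := Y ω)
  rw [hunion, two_mul]
  exact (measureReal_union_le _ _).trans
    (add_le_add (hY.measure_ge_le hε) (hY.neg.measure_ge_le hε))

lemma one_sub_sum_le_measureReal_iInter {κ : Type*} [Fintype κ] {μ : Measure Ω}
    [IsProbabilityMeasure μ] {s : κ → Set Ω} {p : κ → ℝ} (h : ∀ i, μ.real (s i)ᶜ ≤ p i) :
    1 - ∑ i, p i ≤ μ.real (⋂ i, s i) := by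
  have hcompl : μ.real (⋂ i, s i)ᶜ ≤ ∑ i, p i := by
    rw [Set.compl_iInter]
    exact (measureReal_iUnion_fintype_le _).trans (Finset.sum_le_sum fun i _ => h i)
  have hcover := measureReal_union_le (μ := μ) (⋂ i, s i) (⋂ i, s i)ᶜ
  rw [Set.union_compl_self, probReal_univ] at hcover
  linarith

variable {κ : Type*} [Fintype κ] {P : Measure Ξ} [IsProbabilityMeasure P] {B δ : ℝ}

lemma hasSubgaussianMGF_sum_sub_integral {f : Ξ → ℝ} (hf : Measurable f)
    (hfB : ∀ ξ, |f ξ| ≤ B) (s : Finset κ) :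
    HasSubgaussianMGF (fun ω : κ → Ξ => ∑ l ∈ s, (f (ω l) - ∫ ξ, f ξ ∂P))
      (s.card * ‖B‖₊ ^ 2) (Measure.pi fun _ => P) := by
  have hindep : iIndepFun (fun (l : κ) (ω : κ → Ξ) => f (ω l) - ∫ ξ, f ξ ∂P)
      (Measure.pi fun _ => P) :=
    iIndepFun_pi (X := fun _ ξ => f ξ - ∫ ξ, f ξ ∂P) fun _ => (hf.sub_const _).aemeasurable
  have hsub (l : κ) : HasSubgaussianMGF (fun ω : κ → Ξ => f (ω l) - ∫ ξ, f ξ ∂P)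
      (‖B‖₊ ^ 2) (Measure.pi fun _ => P) := by
    have hmean : ∫ ω : κ → Ξ, f (ω l) ∂(Measure.pi fun _ => P) = ∫ ξ, f ξ ∂P :=
      integral_comp_eval (μ := fun _ : κ => P) hf.aestronglyMeasurable
    have hwidth : ‖B - -B‖₊ / 2 = ‖B‖₊ := by
      rw [sub_neg_eq_add, ← two_mul, nnnorm_mul, Real.nnnorm_ofNat,
        mul_div_cancel_left₀ _ two_ne_zero]
    rw [← hmean, ← hwidth]
    exact hasSubgaussianMGF_of_mem_Icc (hf.comp (measurable_pi_apply l)).aemeasurable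
      (.of_forall fun ω => abs_le.1 (hfB _))
  simpa using HasSubgaussianMGF.sum_of_iIndepFun hindep (s := s) fun l _ => hsub l

lemma measureReal_pi_abs_mean_sub_integral_ge_le {f : Ξ → ℝ} (hf : Measurable f)
    (hfB : ∀ ξ, |f ξ| ≤ B) {s : Finset κ} (hs : s.Nonempty) {t : ℝ} (ht : 0 ≤ t) :
    (Measure.pi fun _ : κ => P).real
      {ω | t ≤ |(s.card : ℝ)⁻¹ * ∑ l ∈ s, f (ω l) - ∫ ξ, f ξ ∂P|} ≤
      2 * Real.exp (-(s.card * t ^ 2) / (2 * B ^ 2)) := by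
  have hcard : (0 : ℝ) < s.card := by exact_mod_cast hs.card_pos
  have hset : {ω : κ → Ξ | t ≤ |(s.card : ℝ)⁻¹ * ∑ l ∈ s, f (ω l) - ∫ ξ, f ξ ∂P|} =
      {ω | s.card * t ≤ |∑ l ∈ s, (f (ω l) - ∫ ξ, f ξ ∂P)|} := by
    ext ω
    have hsum : ∑ l ∈ s, (f (ω l) - ∫ ξ, f ξ ∂P) =
        s.card * ((s.card : ℝ)⁻¹ * ∑ l ∈ s, f (ω l) - ∫ ξ, f ξ ∂P) := by
      rw [Finset.sum_sub_distrib, Finset.sum_const, nsmul_eq_mul]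
      field_simp
    simp only [Set.mem_ofPred_eq, hsum, abs_mul, Nat.abs_cast, mul_le_mul_iff_right₀ hcard]
  have hexponent : -(s.card * t) ^ 2 / (2 * (s.card * B ^ 2)) =
      -(s.card * t ^ 2) / (2 * B ^ 2) := by
    field_simp
  rw [hset, ← hexponent]
  simpa using measureReal_abs_ge_le_of_hasSubgaussianMGF
    (hasSubgaussianMGF_sum_sub_integral (P := P) hf hfB s) (mul_nonneg hcard.le ht)

/-- Half-width of the confidence interval allotted to an empirical mean of `n` samples with values
in `[-B, B]` that is drawn `m` iterations before the end. The log-confidence `L` stands for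
`log (N / δ)` when `N` such means are controlled simultaneously; growth in `m` pays for the union
bound over the iterations. -/
noncomputable def deviationRadius (B L : ℝ) (n m : ℕ) : ℝ :=
  2 * B * (m + 1) * √(L / n)

lemma deviationRadius_nonneg (hB : 0 ≤ B) (L : ℝ) (n m : ℕ) : 0 ≤ deviationRadius B L n m := by
  unfold deviationRadius
  positivity

lemma pow_mul_add_sum_deviationRadius_le {γ D E L : ℝ} (hγ0 : 0 ≤ γ) (hγ1 : γ < 1) (hB : 0 ≤ B)
    (hD : 0 ≤ D) (hE : 0 ≤ E) (n k : ℕ) :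
    γ ^ k * E + ∑ i ∈ Finset.range k, γ ^ (k - i) * (2 * D + deviationRadius B L n (k - i)) ≤
      (1 + 2 * (1 + B) / (1 - γ) ^ 2) * (γ ^ k * E + D + √(L / n)) := by
  have hterm (i : ℕ) : γ ^ (k - i) * (2 * D + deviationRadius B L n (k - i)) ≤
      2 * (D + B * √(L / n)) * (γ ^ (k - i) * (((k - i : ℕ) : ℝ) + 1)) := by
    have : 0 ≤ 2 * D * (γ ^ (k - i) * ((k - i : ℕ) : ℝ)) := by positivity
    rw [deviationRadius]
    linarith
  calc γ ^ k * E + ∑ i ∈ Finset.range k, γ ^ (k - i) * (2 * D + deviationRadius B L n (k - i))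
      ≤ γ ^ k * E + 2 * (D + B * √(L / n)) * (1 / (1 - γ) ^ 2) := by
        gcongr
        refine (Finset.sum_le_sum fun i _ => hterm i).trans ?_
        rw [← Finset.mul_sum]
        gcongr
        exact sum_range_pow_tsub_mul_tsub_add_one_le hγ0 hγ1 k
    _ ≤ (1 + 2 * (1 + B) / (1 - γ) ^ 2) * (γ ^ k * E + D + √(L / n)) := by
        have hslack : 0 ≤ D + √(L / n) +
            1 / (1 - γ) ^ 2 * (2 * (1 + B) * (γ ^ k * E) + 2 * B * D + 2 * √(L / n)) := by
          positivity
        linear_combination hslack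

lemma exp_neg_deviationRadius_sq_eq_pow (hB : B ≠ 0) {q : ℝ} (hq0 : 0 < q) (hq1 : q ≤ 1) {n : ℕ}
    (hn : n ≠ 0) (m : ℕ) :
    Real.exp (-(n * deviationRadius B (Real.log q⁻¹) n m ^ 2) / (2 * B ^ 2)) =
      q ^ (2 * (m + 1) ^ 2) := by
  have hlog : 0 ≤ Real.log q⁻¹ := Real.log_nonneg ((one_le_inv₀ hq0).2 hq1)
  have hexponent : -(n * deviationRadius B (Real.log q⁻¹) n m ^ 2) / (2 * B ^ 2) =
      ((2 * (m + 1) ^ 2 : ℕ) : ℝ) * Real.log q := by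
    rw [deviationRadius, mul_pow _ (√_), Real.sq_sqrt (by positivity), Real.log_inv]
    push_cast
    field_simp
  rw [hexponent, Real.exp_nat_mul, Real.exp_log hq0]

lemma measureReal_deviationRadius_lt_abs_mean_sub_integral_le {f : Ξ → ℝ} (hf : Measurable f)
    (hB : 0 < B) (hfB : ∀ ξ, |f ξ| ≤ B) {s : Finset κ} (hs : s.Nonempty) {q : ℝ} (hq0 : 0 < q)
    (hq : q ≤ 1 / 2) (m : ℕ) :
    (Measure.pi fun _ : κ => P).real
      {ω | deviationRadius B (Real.log q⁻¹) s.card m <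
        |(s.card : ℝ)⁻¹ * ∑ l ∈ s, f (ω l) - ∫ ξ, f ξ ∂P|} ≤ q * (1 / 2) ^ m := by
  set t := deviationRadius B (Real.log q⁻¹) s.card m
  calc (Measure.pi fun _ : κ => P).real
          {ω | t < |(s.card : ℝ)⁻¹ * ∑ l ∈ s, f (ω l) - ∫ ξ, f ξ ∂P|}
      ≤ (Measure.pi fun _ : κ => P).real
          {ω | t ≤ |(s.card : ℝ)⁻¹ * ∑ l ∈ s, f (ω l) - ∫ ξ, f ξ ∂P|} :=
        measureReal_mono fun ω (hω : t < _) => hω.le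
    _ ≤ 2 * Real.exp (-(s.card * t ^ 2) / (2 * B ^ 2)) :=
        measureReal_pi_abs_mean_sub_integral_ge_le hf hfB hs (deviationRadius_nonneg hB.le _ _ _)
    _ = 2 * q ^ (2 * (m + 1) ^ 2) := by
        rw [exp_neg_deviationRadius_sq_eq_pow hB.ne' hq0 (by linarith) hs.card_pos.ne']
    _ ≤ q * (1 / 2) ^ m := two_mul_pow_le_mul_half_pow hq0.le hq m

lemma sum_half_pow_tsub_div_card_le {ι : Type*} [Fintype ι] [Nonempty ι] (hδ : 0 ≤ δ) (k : ℕ) :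
    ∑ p : Fin k × ι, δ / Fintype.card ι * (1 / 2) ^ (k - p.1 : ℕ) ≤ δ := by
  have hgeom := sum_range_tsub_le_of_hasSum (fun n => by positivity) hasSum_geometric_two k
  calc ∑ p : Fin k × ι, δ / Fintype.card ι * (1 / 2) ^ (k - p.1 : ℕ)
      = δ * ∑ i ∈ Finset.range k, (1 / 2) ^ (k - i) := by
        rw [Fintype.sum_prod_type, Finset.mul_sum, Finset.sum_range]
        refine Finset.sum_congr rfl fun i _ => ?_
        simp only [Finset.sum_const, Finset.card_univ, nsmul_eq_mul]
        field_simp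
    _ ≤ δ * 1 := by gcongr; linarith
    _ = δ := mul_one δ

lemma one_sub_le_measureReal_forall_abs_mean_sub_integral_le {ι : Type*} [Fintype ι]
    [Nontrivial ι] {f : ι → Ξ → ℝ} (hf : ∀ y, Measurable (f y)) (hB : 0 < B)
    (hfB : ∀ y ξ, |f y ξ| ≤ B) {s : Finset κ} (hs : s.Nonempty) (hδ0 : 0 < δ) (hδ1 : δ ≤ 1)
    (k : ℕ) :
    1 - δ ≤ (Measure.pi fun _ : Fin k => Measure.pi fun _ : κ => P).real
      {ω | ∀ i y, |(s.card : ℝ)⁻¹ * ∑ l ∈ s, f y (ω i l) - ∫ ξ, f y ξ ∂P| ≤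
        deviationRadius B (Real.log (Fintype.card ι / δ)) s.card (k - i)} := by
  have hcard : (2 : ℝ) ≤ Fintype.card ι := by exact_mod_cast Fintype.one_lt_card (α := ι)
  have hq : δ / Fintype.card ι ≤ 1 / 2 := by
    rw [div_le_div_iff₀ (by linarith) two_pos]
    linarith
  have hfail (p : Fin k × ι) :
      (Measure.pi fun _ : Fin k => Measure.pi fun _ : κ => P).real
        {ω | |(s.card : ℝ)⁻¹ * ∑ l ∈ s, f p.2 (ω p.1 l) - ∫ ξ, f p.2 ξ ∂P| ≤
          deviationRadius B (Real.log (Fintype.card ι / δ)) s.card (k - p.1)}ᶜ ≤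
        δ / Fintype.card ι * (1 / 2) ^ (k - p.1 : ℕ) := by
    rw [← inv_div δ, Set.compl_ofPred]
    simp only [not_le]
    exact (ENNReal.toReal_mono (measure_ne_top _ _)
      ((measurePreserving_eval (fun _ : Fin k => Measure.pi fun _ : κ => P)
        p.1).measure_preimage_le _)).trans
      (measureReal_deviationRadius_lt_abs_mean_sub_integral_le (hf p.2) hB (hfB p.2) hs
        (by positivity) hq (k - p.1))
  calc 1 - δ ≤ 1 - ∑ p : Fin k × ι, δ / Fintype.card ι * (1 / 2) ^ (k - p.1 : ℕ) :=
        sub_le_sub_left (sum_half_pow_tsub_div_card_le hδ0.le k) 1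
    _ ≤ _ := one_sub_sum_le_measureReal_iInter hfail
    _ = _ := by
        congr 1
        ext ω
        simp only [Set.mem_iInter, Set.mem_ofPred_eq, Prod.forall]

end Concentration

section IntegralComp

variable {X Ξ : Type*} [Fintype X] [MeasurableSpace X] [MeasurableSingletonClass X]
  [MeasurableSpace Ξ] {P : Measure Ξ} [IsProbabilityMeasure P]

lemma abs_integral_comp_sub_integral_comp_le {φ : Ξ → X} (hφ : Measurable φ) (U W : X → ℝ) :
    |∫ ξ, U (φ ξ) ∂P - ∫ ξ, W (φ ξ) ∂P| ≤ ‖U - W‖ := by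
  have hint (V : X → ℝ) : Integrable (fun ξ => V (φ ξ)) P := by
    have := Measure.isProbabilityMeasure_map (μ := P) hφ.aemeasurable
    exact Integrable.of_finite.comp_measurable hφ
  rw [← integral_sub (hint U) (hint W)]
  simpa using norm_integral_le_of_norm_le_const (μ := P)
    (.of_forall fun ξ => norm_le_pi_norm (U - W) (φ ξ))

lemma abs_sub_add_sub_integral_comp_le {φ : Ξ → X} (hφ : Measurable φ) (V U W : X → ℝ) (y : X)
    (c : ℝ) :
    |V y - U y + c - ∫ ξ, W (φ ξ) ∂P| ≤ ‖V - W‖ + 2 * ‖U - W‖ + |c - ∫ ξ, U (φ ξ) ∂P| := by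
  have hVW : |V y - W y| ≤ ‖V - W‖ := norm_le_pi_norm (V - W) y
  have hUW : |U y - W y| ≤ ‖U - W‖ := norm_le_pi_norm (U - W) y
  have hint := abs_integral_comp_sub_integral_comp_le (P := P) hφ U W
  calc |V y - U y + c - ∫ ξ, W (φ ξ) ∂P|
      = |(V y - W y) - (U y - W y) + (∫ ξ, U (φ ξ) ∂P - ∫ ξ, W (φ ξ) ∂P) +
          (c - ∫ ξ, U (φ ξ) ∂P)| := by ring_nf
    _ ≤ |V y - W y| + |U y - W y| + |∫ ξ, U (φ ξ) ∂P - ∫ ξ, W (φ ξ) ∂P| +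
          |c - ∫ ξ, U (φ ξ) ∂P| :=
        (abs_add_le _ _).trans (by grw [abs_add_le, abs_sub])
    _ ≤ ‖V - W‖ + 2 * ‖U - W‖ + |c - ∫ ξ, U (φ ξ) ∂P| := by linarith

end IntegralComp

lemma sum_range_extendSamples {Ξ : Type} [Nonempty Ξ] {E : Type*} [AddCommMonoid E] {k m n : ℕ}
    (ω : Fin k → Fin (m + n) → Ξ) (i : Fin k) (g : Ξ → E) :
    ∑ l ∈ Finset.range m, g (extendSamples k (m + n) ω i l) =
      ∑ l ∈ Finset.univ.map (Fin.castAddEmb n), g (ω i l) := by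
  rw [Finset.sum_range, Finset.sum_map]
  refine Finset.sum_congr rfl fun l _ => ?_
  rw [extendSamples, dif_pos ⟨i.2, by omega⟩]
  rfl

section Iteration

variable {X A Ξ : Type} [Fintype X] [Fintype A] [Nonempty A] [MeasurableSpace X]
  [MeasurableSingletonClass X] [MeasurableSpace Ξ] {P : Measure Ξ} [IsProbabilityMeasure P]
  {ψ : X → A → Ξ → X} {r : A → X → ℝ} {γ : ℝ} {Vpi Vstar V0 : X → ℝ} {M1 M2 : ℕ}

lemma one_sub_le_measureReal_forall_abs_mean_extendSamples_le [Nonempty Ξ]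
    (hψ : ∀ x a, Measurable (ψ x a)) {B δ : ℝ} (hB : 0 < B) (hVpi : ∀ x, |Vpi x| ≤ B)
    (hM1 : 1 ≤ M1) (M2 : ℕ) (hδ0 : 0 < δ) (hδ1 : δ ≤ 1) (k : ℕ) :
    1 - δ ≤ (Measure.pi fun _ : Fin k => Measure.pi fun _ : Fin (M1 + M2) => P).real
      {ω | ∀ i < k, ∀ x a, |(M1 : ℝ)⁻¹ * ∑ l ∈ Finset.range M1,
          Vpi (ψ x a (extendSamples k (M1 + M2) ω i l)) - ∫ ξ, Vpi (ψ x a ξ) ∂P| ≤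
        deviationRadius B (Real.log ((Fintype.card X : ℝ) * Fintype.card A / δ)) M1 (k - i)} := by
  rcases subsingleton_or_nontrivial X with hX | hX
  -- `log (|X||A| / δ)` may be arbitrarily small here, but then `V^π` is constant.
  · have hsure (ω : Fin k → Fin (M1 + M2) → Ξ) (i : ℕ) (x : X) (a : A) :
        (M1 : ℝ)⁻¹ * ∑ l ∈ Finset.range M1, Vpi (ψ x a (extendSamples k (M1 + M2) ω i l)) -
          ∫ ξ, Vpi (ψ x a ξ) ∂P = 0 := by
      have hconst (y : X) : Vpi y = Vpi x := congrArg Vpi (Subsingleton.elim y x)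
      simp [hconst, Nat.one_le_iff_ne_zero.1 hM1]
    simp only [hsure, abs_zero, deviationRadius_nonneg hB.le, implies_true, Set.ofPred_true,
      probReal_univ]
    linarith
  · have hne : (Finset.univ.map (Fin.castAddEmb (n := M1) M2)).Nonempty :=
      Finset.card_pos.1 (by rwa [Finset.card_map, Finset.card_fin])
    refine (one_sub_le_measureReal_forall_abs_mean_sub_integral_le (ι := X × A) (P := P)
      (f := fun y ξ => Vpi (ψ y.1 y.2 ξ)) (fun y => (measurable_of_finite Vpi).comp (hψ _ _)) hB
      (fun y ξ => hVpi _) hne hδ0 hδ1 k).trans (measureReal_mono fun ω hω i hi x a => ?_)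
    have hdev := Set.mem_ofPred.1 hω ⟨i, hi⟩ (x, a)
    rw [← sum_range_extendSamples ω ⟨i, hi⟩ fun ξ => Vpi (ψ x a ξ)] at hdev
    simpa using hdev

variable [Nonempty X]

lemma norm_tabIter_succ_sub_le (hψ : ∀ x a, Measurable (ψ x a)) (hγ : 0 ≤ γ)
    (hV : ∀ x, Vstar x = ⨆ a : A, (r a x + γ * ∫ ξ, Vstar (ψ x a ξ) ∂P)) (hM2 : 1 ≤ M2)
    {i : ℕ} {ω : ℕ → ℕ → Ξ} {t : ℝ}
    (ht : ∀ x a, |(M1 : ℝ)⁻¹ * ∑ l ∈ Finset.range M1, Vpi (ψ x a (ω i l)) -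
      ∫ ξ, Vpi (ψ x a ξ) ∂P| ≤ t) :
    ‖tabIter ψ r γ Vpi M1 M2 V0 (i + 1) ω - Vstar‖ ≤
      γ * (‖tabIter ψ r γ Vpi M1 M2 V0 i ω - Vstar‖ + (2 * ‖Vpi - Vstar‖ + t)) := by
  refine (pi_norm_le_iff_of_nonempty _).2 fun x => ?_
  rw [Pi.sub_apply, Real.norm_eq_abs, tabIter]
  have hcard : (Finset.Ico M1 (M1 + M2)).card = M2 := by simp
  have hne : (Finset.Ico M1 (M1 + M2)).Nonempty := Finset.nonempty_Ico.2 (by omega)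
  rw [← congrArg Nat.cast hcard]
  refine abs_inv_card_mul_sum_sub_le hne fun j _ => ?_
  rw [hV x]
  refine abs_ciSup_sub_ciSup_le fun a => ?_
  rw [add_sub_add_left_eq_sub, ← mul_sub, abs_mul, abs_of_nonneg hγ, ← add_assoc]
  gcongr
  exact (abs_sub_add_sub_integral_comp_le (hψ x a) _ _ _ _ _).trans (by gcongr; exact ht x a)

lemma norm_tabIter_sub_le (hψ : ∀ x a, Measurable (ψ x a)) (hγ : 0 ≤ γ)
    (hV : ∀ x, Vstar x = ⨆ a : A, (r a x + γ * ∫ ξ, Vstar (ψ x a ξ) ∂P)) (hM2 : 1 ≤ M2)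
    {k : ℕ} {ω : ℕ → ℕ → Ξ} {t : ℕ → ℝ}
    (ht : ∀ i < k, ∀ x a, |(M1 : ℝ)⁻¹ * ∑ l ∈ Finset.range M1, Vpi (ψ x a (ω i l)) -
      ∫ ξ, Vpi (ψ x a ξ) ∂P| ≤ t i) :
    ‖tabIter ψ r γ Vpi M1 M2 V0 k ω - Vstar‖ ≤
      γ ^ k * ‖V0 - Vstar‖ + ∑ i ∈ Finset.range k, γ ^ (k - i) * (2 * ‖Vpi - Vstar‖ + t i) :=
  le_pow_mul_add_sum_of_le_mul_add hγ
    (u := fun i => ‖tabIter ψ r γ Vpi M1 M2 V0 i ω - Vstar‖)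
    fun i hi => norm_tabIter_succ_sub_le hψ hγ hV hM2 (ht i hi)

theorem stmt_1_general [Nonempty Ξ] (hγ0 : 0 ≤ γ) (hγ1 : γ < 1)
    (hψ : ∀ x a, Measurable (ψ x a)) {B : ℝ} (hB : 0 < B) (hVpi : ∀ x, |Vpi x| ≤ B)
    (hV : ∀ x, Vstar x = ⨆ a : A, (r a x + γ * ∫ ξ, Vstar (ψ x a ξ) ∂P))
    (V0 : X → ℝ) (hM1 : 1 ≤ M1) (hM2 : 1 ≤ M2) (k : ℕ) {δ : ℝ} (hδ0 : 0 < δ) (hδ1 : δ ≤ 1) :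
    ENNReal.ofReal (1 - δ) ≤
      (Measure.pi fun _ : Fin k => Measure.pi fun _ : Fin (M1 + M2) => P)
        {ω | ∀ x : X,
          |tabIter ψ r γ Vpi M1 M2 V0 k (extendSamples k (M1 + M2) ω) x - Vstar x| ≤
            (1 + 2 * (1 + B) / (1 - γ) ^ 2) * (γ ^ k * (⨆ x' : X, |V0 x' - Vstar x'|) +
              (⨆ x' : X, |Vpi x' - Vstar x'|) +
              √(Real.log ((Fintype.card X : ℝ) * Fintype.card A / δ) / M1))} := by
  rw [← ofReal_measureReal]
  refine ENNReal.ofReal_le_ofReal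
    ((one_sub_le_measureReal_forall_abs_mean_extendSamples_le hψ hB hVpi hM1 M2 hδ0 hδ1 k).trans
      (measureReal_mono fun ω hω x => ?_))
  have herror := (norm_tabIter_sub_le (V0 := V0) hψ hγ0 hV hM2 hω).trans
    (pow_mul_add_sum_deviationRadius_le hγ0 hγ1 hB.le (norm_nonneg _) (norm_nonneg _) M1 k)
  rw [pi_norm_eq_iSup_abs (V0 - Vstar), pi_norm_eq_iSup_abs (Vpi - Vstar)] at herror
  exact (norm_le_pi_norm _ x).trans herror

end Iteration

/-- Corollary 1, tabular case: high-probability bound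
`max_x |V̂_k^up(x) - V*(x)| ≤ C [ γ^k max_x |V̂_0^up - V*| + max_x |V^π - V*|
+ √(log(|X||A|/δ)/M₁) ]` with `C` depending only on `γ` and `R_max`. -/
theorem stmt_1 (γ Rmax : ℝ) (hγ0 : 0 < γ) (hγ1 : γ < 1) (hR : 0 < Rmax) :
    ∃ C : ℝ, 0 < C ∧
      ∀ (X A Ξ : Type)
        [Fintype X] [Nonempty X] [Fintype A] [Nonempty A]
        [MeasurableSpace X] [MeasurableSingletonClass X]
        [MeasurableSpace Ξ] [Nonempty Ξ]
        (P : Measure Ξ) [IsProbabilityMeasure P]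
        (ψ : X → A → Ξ → X), (∀ x a, Measurable (ψ x a)) →
      ∀ (r : A → X → ℝ), (∀ a x, |r a x| ≤ Rmax) →
      ∀ (Vpi : X → ℝ), (∀ x, |Vpi x| ≤ Rmax / (1 - γ)) →
      ∀ (Vstar : X → ℝ),
        (∀ x, Vstar x = ⨆ a : A, (r a x + γ * ∫ ξ, Vstar (ψ x a ξ) ∂P)) →
      ∀ (V0 : X → ℝ) (M1 M2 : ℕ), 1 ≤ M1 → 1 ≤ M2 →
      ∀ (k : ℕ) (δ : ℝ), 0 < δ → δ < 1 →
        ENNReal.ofReal (1 - δ) ≤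
          (Measure.pi fun _ : Fin k => Measure.pi fun _ : Fin (M1 + M2) => P)
            {ω | ∀ x : X,
              |tabIter ψ r γ Vpi M1 M2 V0 k (extendSamples k (M1 + M2) ω) x - Vstar x| ≤
                C * (γ ^ k * (⨆ x' : X, |V0 x' - Vstar x'|) +
                  (⨆ x' : X, |Vpi x' - Vstar x'|) +
                  Real.sqrt (Real.log
                    ((Fintype.card X : ℝ) * (Fintype.card A : ℝ) / δ) / M1))} := by
  have h1γ : 0 < 1 - γ := sub_pos.2 hγ1
  exact ⟨_, by positivity,
    fun _ _ _ _ _ _ _ _ _ _ _ _ _ _ hψ _ _ _ hVpi _ hV V0 _ _ hM1 hM2 k _ hδ0 hδ1 =>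
      stmt_1_general hγ0.le hγ1 hψ (div_pos hR h1γ) hVpi hV V0 hM1 hM2 k hδ0 hδ1.le⟩
end

section
/- There exists an absolute constant C such that for every dimension d ≥ 1, every integer N ≥ 2 and every real p ≥ 1, if X_1, …, X_N are i.i.d. uniformly distributed on [0,1]^d, then ( E[ ρ(X_N, X)^p ] )^{1/p} ≤ C √d ( p · log N / N )^{1/d}. -/
open MeasureTheory

/-- The unit cube `[0,1]^d` in Euclidean space. -/
def unitCube (d : ℕ) : Set (EuclideanSpace ℝ (Fin d)) :=
  {y | ∀ i, y i ∈ Set.Icc (0 : ℝ) 1}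

/-- The uniform distribution on `[0,1]^d` (normalized Lebesgue measure). -/
noncomputable def uniformCube (d : ℕ) : Measure (EuclideanSpace ℝ (Fin d)) :=
  volume.restrict (unitCube d)

/-- The covering radius `ρ(X_N, X) = sup_{x ∈ [0,1]^d} min_{k ≤ N} ‖x - X_k‖`. -/
noncomputable def cubeCovRad (d : ℕ) {N : ℕ} (xs : Fin N → EuclideanSpace ℝ (Fin d)) : ℝ :=
  ⨆ x : unitCube d, ⨅ k : Fin N, dist (x : EuclideanSpace ℝ (Fin d)) (xs k)

/-!
Cut the cube into `m ^ d` congruent cells of side `1 / m`. If every cell contains a sample point,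
the covering radius is at most the cell diameter `√d / m`; otherwise it is still at most `√d`. By
the union bound some cell is missed with probability at most `m ^ d * (1 - m ^ (-d)) ^ N`, which is
at most `N ^ (-p)` as soon as `m ^ (-d) ≥ 2 p log N / N`. Taking `1 / m` comparable to
`(p log N / N) ^ (1 / d)` makes both contributions to the `p`-th moment of the required order; if
that quantity is too large for such an `m` to exist, the bound `√d` suffices.
-/

section CoveringRadius

variable {E κ : Type*} [PseudoMetricSpace E] {S : Set E} {xs : κ → E}

/-- The covering radius `sup_{x ∈ S} inf_k dist x (xs k)` of the points `xs` with respect to a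
subset `S` of a metric space; `cubeCovRad` is the case of the unit cube. As a real supremum it is
`0` when unbounded. -/
noncomputable def coveringRadius (S : Set E) (xs : κ → E) : ℝ :=
  ⨆ x : S, ⨅ k, dist (x : E) (xs k)

lemma cubeCovRad_eq_coveringRadius {d N : ℕ} (xs : Fin N → EuclideanSpace ℝ (Fin d)) :
    cubeCovRad d xs = coveringRadius (unitCube d) xs :=
  rfl

lemma coveringRadius_nonneg (S : Set E) (xs : κ → E) : 0 ≤ coveringRadius S xs :=
  Real.iSup_nonneg fun _ => Real.iInf_nonneg fun _ => dist_nonneg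

lemma coveringRadius_le {r : ℝ} (hr : 0 ≤ r) (h : ∀ x ∈ S, ∃ k, dist x (xs k) ≤ r) :
    coveringRadius S xs ≤ r := by
  refine Real.iSup_le (fun x => ?_) hr
  obtain ⟨k, hk⟩ := h x x.2
  exact (ciInf_le ⟨0, Set.forall_mem_range.2 fun _ => dist_nonneg⟩ k).trans hk

lemma coveringRadius_le_of_forall_mem [Nonempty κ] {D : ℝ} (hD : 0 ≤ D)
    (hS : ∀ x ∈ S, ∀ y ∈ S, dist x y ≤ D) (hxs : ∀ k, xs k ∈ S) : coveringRadius S xs ≤ D :=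
  coveringRadius_le hD fun x hx => ⟨Classical.arbitrary κ, hS x hx _ (hxs _)⟩

lemma coveringRadius_le_of_hits_cells {ι : Type*} {Q : ι → Set E} {r : ℝ} (hr : 0 ≤ r)
    (hcover : S ⊆ ⋃ j, Q j) (hdiam : ∀ j, ∀ x ∈ Q j, ∀ y ∈ Q j, dist x y ≤ r)
    (hits : ∀ j, ∃ k, xs k ∈ Q j) : coveringRadius S xs ≤ r := by
  refine coveringRadius_le hr fun x hx => ?_
  obtain ⟨j, hxj⟩ := Set.mem_iUnion.1 (hcover hx)
  obtain ⟨k, hkj⟩ := hits j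
  exact ⟨k, hdiam j x hxj _ hkj⟩

end CoveringRadius

section RandomPoints

variable {Ω E ι κ : Type*}

lemma setOf_forall_notMem_eq_pi (A : Set E) :
    {xs : κ → E | ∀ k, xs k ∉ A} = Set.univ.pi fun _ => Aᶜ := by
  ext xs
  simp

variable [MeasurableSpace Ω] [MeasurableSpace E]

lemma measurableSet_forall_notMem [Countable κ] {A : Set E} (hA : MeasurableSet A) :
    MeasurableSet {xs : κ → E | ∀ k, xs k ∉ A} := by
  rw [setOf_forall_notMem_eq_pi]
  exact .univ_pi fun _ => hA.compl

lemma integral_le_add_measureReal_mul {P : Measure Ω} [IsProbabilityMeasure P] {f : Ω → ℝ}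
    {B : Set Ω} (hB : MeasurableSet B) {a b : ℝ} (ha : 0 ≤ a) (hf : ∀ ω, 0 ≤ f ω)
    (hfa : ∀ ω ∉ B, f ω ≤ a) (hfb : ∀ᵐ ω ∂P, f ω ≤ b) :
    ∫ ω, f ω ∂P ≤ a + P.real B * b := by
  have hint : Integrable (B.indicator fun _ => b) P := (integrable_const b).indicator hB
  calc ∫ ω, f ω ∂P ≤ ∫ ω, (a + B.indicator (fun _ => b) ω) ∂P := by
        refine integral_mono_of_nonneg (.of_forall hf) ((integrable_const a).add hint) ?_
        filter_upwards [hfb] with ω hω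
        by_cases hωB : ω ∈ B
        · simpa only [Set.indicator_of_mem hωB] using hω.trans (le_add_of_nonneg_left ha)
        · simpa only [Set.indicator_of_notMem hωB, add_zero] using hfa ω hωB
    _ = a + P.real B * b := by
        rw [integral_add (integrable_const a) hint, integral_indicator_const b hB]
        simp

variable [Fintype ι] [Fintype κ] {μ : Measure E} [IsProbabilityMeasure μ]

lemma measureReal_pi_forall_notMem {A : Set E} (hA : MeasurableSet A) :
    (Measure.pi fun _ : κ => μ).real {xs | ∀ k, xs k ∉ A} =
      (1 - μ.real A) ^ Fintype.card κ := by
  rw [setOf_forall_notMem_eq_pi, measureReal_def, Measure.pi_pi, ENNReal.toReal_prod]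
  simp only [← measureReal_def, probReal_compl_eq_one_sub hA, Finset.prod_const, Finset.card_univ]

lemma measureReal_pi_iUnion_forall_notMem_le {Q : ι → Set E} (hQ : ∀ j, MeasurableSet (Q j))
    {q : ℝ} (hq : ∀ j, q ≤ μ.real (Q j)) :
    (Measure.pi fun _ : κ => μ).real (⋃ j, {xs | ∀ k, xs k ∉ Q j}) ≤
      Fintype.card ι * (1 - q) ^ Fintype.card κ :=
  calc (Measure.pi fun _ : κ => μ).real (⋃ j, {xs | ∀ k, xs k ∉ Q j})
      ≤ ∑ j, (Measure.pi fun _ : κ => μ).real {xs | ∀ k, xs k ∉ Q j} :=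
        measureReal_iUnion_fintype_le _
    _ ≤ ∑ _j : ι, (1 - q) ^ Fintype.card κ := by
        refine Finset.sum_le_sum fun j _ => ?_
        rw [measureReal_pi_forall_notMem (hQ j)]
        exact pow_le_pow_left₀ (sub_nonneg.2 measureReal_le_one) (sub_le_sub_left (hq j) 1) _
    _ = Fintype.card ι * (1 - q) ^ Fintype.card κ := by simp

theorem integral_coveringRadius_rpow_le [PseudoMetricSpace E] [Nonempty κ] {S : Set E}
    (hμS : ∀ᵐ x ∂μ, x ∈ S) {D : ℝ} (hD : 0 ≤ D) (hS : ∀ x ∈ S, ∀ y ∈ S, dist x y ≤ D)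
    {Q : ι → Set E} (hQ : ∀ j, MeasurableSet (Q j)) (hcover : S ⊆ ⋃ j, Q j) {r : ℝ} (hr : 0 ≤ r)
    (hdiam : ∀ j, ∀ x ∈ Q j, ∀ y ∈ Q j, dist x y ≤ r) {q : ℝ} (hq : ∀ j, q ≤ μ.real (Q j))
    {p : ℝ} (hp : 0 ≤ p) :
    ∫ xs, coveringRadius S xs ^ p ∂(Measure.pi fun _ : κ => μ) ≤
      r ^ p + Fintype.card ι * (1 - q) ^ Fintype.card κ * D ^ p := by
  have hsupp : ∀ᵐ xs ∂(Measure.pi fun _ : κ => μ), ∀ k, xs k ∈ S :=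
    ae_all_iff.2 fun k => (Measure.tendsto_eval_ae_ae (i := k)).eventually hμS
  refine (integral_le_add_measureReal_mul (B := ⋃ j, {xs | ∀ k, xs k ∉ Q j}) (b := D ^ p)
    (.iUnion fun j => measurableSet_forall_notMem (hQ j)) (Real.rpow_nonneg hr p)
    (fun xs => Real.rpow_nonneg (coveringRadius_nonneg S xs) p) (fun xs hxs => ?_) ?_).trans ?_
  · have hits : ∀ j, ∃ k, xs k ∈ Q j := by simpa using hxs
    exact Real.rpow_le_rpow (coveringRadius_nonneg S xs)
      (coveringRadius_le_of_hits_cells hr hcover hdiam hits) hp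
  · filter_upwards [hsupp] with xs hxs
    exact Real.rpow_le_rpow (coveringRadius_nonneg S xs)
      (coveringRadius_le_of_forall_mem hD hS hxs) hp
  · gcongr
    exact measureReal_pi_iUnion_forall_notMem_le hQ hq

end RandomPoints

section AxisCube

variable {ι : Type*}

/-- The closed axis-parallel cube with lowest corner `a` and side `r` in Euclidean space. -/
def axisCube (a : ι → ℝ) (r : ℝ) : Set (EuclideanSpace ℝ ι) :=
  {y | ∀ i, y i ∈ Set.Icc (a i) (a i + r)}

lemma axisCube_eq_preimage (a : ι → ℝ) (r : ℝ) :
    axisCube a r = WithLp.ofLp ⁻¹' Set.Icc a fun i => a i + r := by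
  ext y
  exact forall_and

lemma unitCube_eq_axisCube (d : ℕ) : unitCube d = axisCube 0 1 := by
  simp [unitCube, axisCube]

lemma measurableSet_axisCube [Countable ι] (a : ι → ℝ) (r : ℝ) :
    MeasurableSet (axisCube a r) := by
  rw [axisCube_eq_preimage]
  exact WithLp.measurable_ofLp 2 (ι → ℝ) measurableSet_Icc

variable [Fintype ι]

lemma volume_axisCube (a : ι → ℝ) (r : ℝ) :
    volume (axisCube a r) = ENNReal.ofReal r ^ Fintype.card ι := by
  rw [axisCube_eq_preimage, (PiLp.volume_preserving_ofLp ι).measure_preimage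
    measurableSet_Icc.nullMeasurableSet, Real.volume_Icc_pi]
  simp

lemma dist_le_of_mem_axisCube {a : ι → ℝ} {r : ℝ} (hr : 0 ≤ r) {x y : EuclideanSpace ℝ ι}
    (hx : x ∈ axisCube a r) (hy : y ∈ axisCube a r) : dist x y ≤ √(Fintype.card ι) * r := by
  have hcoord : ∀ i, dist (x i) (y i) ≤ r := fun i =>
    (Real.dist_le_of_mem_Icc (hx i) (hy i)).trans_eq (add_sub_cancel_left _ _)
  calc dist x y = √(∑ i, dist (x i) (y i) ^ 2) := EuclideanSpace.dist_eq x y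
    _ ≤ √(∑ _i : ι, r ^ 2) := by gcongr; exact hcoord _
    _ = √(Fintype.card ι) * r := by simp [Real.sqrt_sq hr]

end AxisCube

section Grid

/-- The cell with index `j` of the subdivision of the unit cube into `m ^ d` cubes of side `1 / m`:
its lowest corner is `j / m`. The cells are closed, so neighbours overlap in null sets. -/
noncomputable def gridCell {d m : ℕ} (j : Fin d → Fin m) : Set (EuclideanSpace ℝ (Fin d)) :=
  axisCube (fun i => (j i : ℝ) / m) (1 / m)

lemma exists_fin_mem_Icc_div {m : ℕ} (hm : 0 < m) {x : ℝ} (hx : x ∈ Set.Icc (0 : ℝ) 1) :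
    ∃ j : Fin m, x ∈ Set.Icc ((j : ℝ) / m) (j / m + 1 / m) := by
  have hm' : (0 : ℝ) < m := Nat.cast_pos.2 hm
  have hceil_le : ⌈x * m⌉₊ ≤ m := Nat.ceil_le.2 (mul_le_of_le_one_left hm'.le hx.2)
  have hlower : ((⌈x * m⌉₊ - 1 : ℕ) : ℝ) ≤ x * m := by
    rcases Nat.eq_zero_or_pos ⌈x * m⌉₊ with h | h
    · simpa [h] using mul_nonneg hx.1 hm'.le
    · rw [Nat.cast_pred h]
      linarith [Nat.ceil_lt_add_one (mul_nonneg hx.1 hm'.le)]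
  have hupper : x * m ≤ ((⌈x * m⌉₊ - 1 : ℕ) : ℝ) + 1 := by
    refine (Nat.le_ceil _).trans ?_
    exact_mod_cast le_tsub_add
  refine ⟨⟨⌈x * m⌉₊ - 1, by omega⟩, (div_le_iff₀ hm').2 hlower, ?_⟩
  rwa [← add_div, le_div_iff₀ hm']

variable {d m : ℕ}

lemma measurableSet_gridCell (j : Fin d → Fin m) : MeasurableSet (gridCell j) :=
  measurableSet_axisCube _ _

lemma unitCube_subset_iUnion_gridCell (hm : 0 < m) :
    unitCube d ⊆ ⋃ j : Fin d → Fin m, gridCell j := by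
  intro x hx
  choose j hj using fun i => exists_fin_mem_Icc_div hm (hx i)
  exact Set.mem_iUnion.2 ⟨j, hj⟩

lemma gridCell_subset_unitCube (j : Fin d → Fin m) : gridCell j ⊆ unitCube d := by
  intro y hy i
  have hm : (0 : ℝ) < m := Nat.cast_pos.2 (j i).pos
  have hcorner : (j i : ℝ) / m + 1 / m ≤ 1 := by
    rw [← add_div, div_le_one hm]
    exact_mod_cast (j i).isLt
  exact ⟨le_trans (by positivity) (hy i).1, (hy i).2.trans hcorner⟩

instance isProbabilityMeasure_uniformCube (d : ℕ) : IsProbabilityMeasure (uniformCube d) :=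
  ⟨by simp [uniformCube, unitCube_eq_axisCube, volume_axisCube]⟩

lemma ae_uniformCube_mem_unitCube (d : ℕ) : ∀ᵐ x ∂uniformCube d, x ∈ unitCube d := by
  refine ae_restrict_mem ?_
  rw [unitCube_eq_axisCube]
  exact measurableSet_axisCube 0 1

lemma uniformCube_real_gridCell (j : Fin d → Fin m) :
    (uniformCube d).real (gridCell j) = (1 / m) ^ d := by
  rw [uniformCube, measureReal_restrict_apply (measurableSet_gridCell j),
    Set.inter_eq_left.2 (gridCell_subset_unitCube j), measureReal_def, gridCell, volume_axisCube]
  simp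

lemma dist_le_sqrt_of_mem_unitCube {x y : EuclideanSpace ℝ (Fin d)} (hx : x ∈ unitCube d)
    (hy : y ∈ unitCube d) : dist x y ≤ √d := by
  rw [unitCube_eq_axisCube] at hx hy
  simpa using dist_le_of_mem_axisCube zero_le_one hx hy

lemma integral_cubeCovRad_rpow_le_grid {N : ℕ} (hN : 0 < N) (hm : 0 < m) {p : ℝ} (hp : 0 ≤ p) :
    ∫ xs, cubeCovRad d xs ^ p ∂(Measure.pi fun _ : Fin N => uniformCube d) ≤
      √d ^ p * ((1 / m) ^ p + (m : ℝ) ^ d * (1 - (1 / m) ^ d) ^ N) := by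
  have : Nonempty (Fin N) := ⟨⟨0, hN⟩⟩
  simp only [cubeCovRad_eq_coveringRadius]
  have hdiam : ∀ j : Fin d → Fin m, ∀ x ∈ gridCell j, ∀ y ∈ gridCell j,
      dist x y ≤ √d * (1 / m) := fun j x hx y hy => by
    simpa using dist_le_of_mem_axisCube (by positivity) hx hy
  refine (integral_coveringRadius_rpow_le (κ := Fin N) (ae_uniformCube_mem_unitCube d)
    (Real.sqrt_nonneg d) (fun x hx y hy => dist_le_sqrt_of_mem_unitCube hx hy)
    measurableSet_gridCell (unitCube_subset_iUnion_gridCell hm)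
    (by positivity) hdiam (fun j => (uniformCube_real_gridCell j).ge) hp).trans_eq ?_
  rw [Real.mul_rpow (by positivity) (by positivity)]
  simp only [Fintype.card_fun, Fintype.card_fin, Nat.cast_pow]
  ring

end Grid

section Asymptotics

lemma exists_nat_le_one_div_le_two_mul {u : ℝ} (hu : 0 < u) (hu1 : u ≤ 1) :
    ∃ m : ℕ, 0 < m ∧ u ≤ 1 / m ∧ 1 / m ≤ 2 * u := by
  have hm : 0 < ⌊1 / u⌋₊ := Nat.floor_pos.2 ((one_le_div hu).2 hu1)
  have hm1 : (1 : ℝ) ≤ ⌊1 / u⌋₊ := Nat.one_le_cast.2 hm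
  have hlt : 1 < (⌊1 / u⌋₊ + 1) * u := (div_lt_iff₀ hu).1 (Nat.lt_floor_add_one _)
  refine ⟨⌊1 / u⌋₊, hm, ?_, ?_⟩
  · exact (le_one_div (by positivity) hu).1 (Nat.floor_le (by positivity))
  · rw [div_le_iff₀ (by positivity)]
    nlinarith

lemma one_div_le_two_mul_log_div {N : ℕ} (hN : 2 ≤ N) {p : ℝ} (hp : 1 ≤ p) :
    1 / (N : ℝ) ≤ 2 * (p * Real.log N / N) := by
  have hlog : Real.log 2 ≤ Real.log N :=
    Real.log_le_log two_pos (Nat.ofNat_le_cast.2 hN)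
  have hone : 1 ≤ 2 * (p * Real.log N) := by nlinarith [Real.log_two_gt_d9]
  rw [← mul_div_assoc]
  gcongr

-- The left side is the union bound for `N` points to miss one of `M` equally likely cells.
lemma mul_one_sub_one_div_pow_le_rpow_neg {N : ℕ} (hN : 2 ≤ N) {p M : ℝ} (hp : 1 ≤ p) (hM : 1 ≤ M)
    (h : 2 * (p * Real.log N / N) ≤ 1 / M) : M * (1 - 1 / M) ^ N ≤ (N : ℝ) ^ (-p) := by
  have hN0 : (0 : ℝ) < N := by positivity
  have hM0 : 0 < M := by positivity
  have hMN : M ≤ N :=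
    (one_div_le_one_div hN0 hM0).1 ((one_div_le_two_mul_log_div hN hp).trans h)
  have hmiss : (1 - 1 / M) ^ N ≤ (N : ℝ) ^ (-(2 * p)) :=
    calc (1 - 1 / M) ^ N ≤ Real.exp (-(2 * (p * Real.log N / N))) ^ N := by
          refine pow_le_pow_left₀ (sub_nonneg.2 ((div_le_one hM0).2 hM)) ?_ N
          exact (sub_le_sub_left h 1).trans (Real.one_sub_le_exp_neg _)
      _ = (N : ℝ) ^ (-(2 * p)) := by
          rw [← Real.exp_nat_mul, Real.rpow_def_of_pos hN0]
          congr 1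
          field_simp
  calc M * (1 - 1 / M) ^ N ≤ N * (N : ℝ) ^ (-(2 * p)) :=
        mul_le_mul hMN hmiss (pow_nonneg (sub_nonneg.2 ((div_le_one hM0).2 hM)) N) hN0.le
    _ = (N : ℝ) ^ (1 + -(2 * p)) := by rw [Real.rpow_add hN0, Real.rpow_one]
    _ ≤ (N : ℝ) ^ (-p) :=
        Real.rpow_le_rpow_of_exponent_le (Nat.one_le_cast.2 (by omega)) (by linarith)

variable {d N : ℕ} {p u : ℝ}

lemma exists_grid_bound_le (hd : 1 ≤ d) (hN : 2 ≤ N) (hp : 1 ≤ p) (hu : 0 < u) (hu1 : u ≤ 1)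
    (h : 2 * (p * Real.log N / N) ≤ u ^ d) :
    ∃ m : ℕ, 0 < m ∧ (1 / (m : ℝ)) ^ p + (m : ℝ) ^ d * (1 - (1 / m) ^ d) ^ N ≤ (3 * u) ^ p := by
  obtain ⟨m, hm, hum, hmu⟩ := exists_nat_le_one_div_le_two_mul hu hu1
  have hp0 : 0 ≤ p := by positivity
  have hcell : 2 * (p * Real.log N / N) ≤ 1 / (m : ℝ) ^ d := by
    rw [← one_div_pow]
    exact h.trans (pow_le_pow_left₀ hu.le hum d)
  have hNu : 1 / (N : ℝ) ≤ u :=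
    ((one_div_le_two_mul_log_div hN hp).trans h).trans (pow_le_of_le_one hu.le hu1 (by omega))
  have hmiss : (m : ℝ) ^ d * (1 - (1 / m) ^ d) ^ N ≤ u ^ p :=
    calc (m : ℝ) ^ d * (1 - (1 / m) ^ d) ^ N ≤ (N : ℝ) ^ (-p) := by
          rw [one_div_pow]
          exact mul_one_sub_one_div_pow_le_rpow_neg hN hp
            (one_le_pow₀ (Nat.one_le_cast.2 hm)) hcell
      _ = (1 / (N : ℝ)) ^ p := by rw [one_div, Real.rpow_neg_eq_inv_rpow]
      _ ≤ u ^ p := Real.rpow_le_rpow (by positivity) hNu hp0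
  refine ⟨m, hm, ?_⟩
  calc (1 / (m : ℝ)) ^ p + (m : ℝ) ^ d * (1 - (1 / m) ^ d) ^ N ≤ (2 * u) ^ p + u ^ p :=
        add_le_add (Real.rpow_le_rpow (by positivity) hmu hp0) hmiss
    _ ≤ (2 * u + u) ^ p := Real.add_rpow_le_rpow_add (by positivity) hu.le hp
    _ = (3 * u) ^ p := by ring_nf

theorem integral_cubeCovRad_rpow_le (hd : 1 ≤ d) (hN : 2 ≤ N) (hp : 1 ≤ p) (hu : 0 < u)
    (h : 2 * (p * Real.log N / N) ≤ u ^ d) :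
    ∫ xs, cubeCovRad d xs ^ p ∂(Measure.pi fun _ : Fin N => uniformCube d) ≤
      (√d * (3 * u)) ^ p := by
  have hp0 : 0 ≤ p := by positivity
  suffices hgrid : ∃ m : ℕ, 0 < m ∧
      (1 / (m : ℝ)) ^ p + (m : ℝ) ^ d * (1 - (1 / m) ^ d) ^ N ≤ (3 * u) ^ p by
    obtain ⟨m, hm, hle⟩ := hgrid
    refine (integral_cubeCovRad_rpow_le_grid (by omega) hm hp0).trans ?_
    rw [Real.mul_rpow (Real.sqrt_nonneg d) (by positivity)]
    gcongr
  rcases le_total u 1 with hu1 | hu1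
  · exact exists_grid_bound_le hd hN hp hu hu1 h
  · -- With a single cell no miss is possible, and the grid bound is just `√d ^ p`.
    refine ⟨1, one_pos, ?_⟩
    have hmiss : (0 : ℝ) ^ N = 0 := zero_pow (by omega)
    simpa [hmiss] using Real.one_le_rpow (by linarith : 1 ≤ 3 * u) hp0

end Asymptotics

/-- there is an absolute constant `C` such that for every `d ≥ 1`, `N ≥ 2`
and `p ≥ 1`, for i.i.d. uniform points on the cube,
`E[ρ(X_N,X)^p]^{1/p} ≤ C √d (p log N / N)^{1/d}`. -/
theorem stmt_6 :
    ∃ C : ℝ, 0 < C ∧ ∀ (d N : ℕ), 1 ≤ d → 2 ≤ N → ∀ p : ℝ, 1 ≤ p →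
      (∫ xs, cubeCovRad d xs ^ p ∂(Measure.pi fun _ : Fin N => uniformCube d)) ^ (1 / p) ≤
        C * Real.sqrt d * (p * Real.log N / N) ^ (1 / (d : ℝ)) := by
  refine ⟨6, by norm_num, fun d N hd hN p hp => ?_⟩
  have hlog : 0 < Real.log N := Real.log_pos (Nat.one_lt_cast.2 hN)
  set t := p * Real.log N / N
  have ht : 0 < t := by positivity
  have hside : 2 * t ≤ (2 * t ^ (1 / (d : ℝ))) ^ d := by
    rw [mul_pow, one_div, Real.rpow_inv_natCast_pow ht.le (by omega)]
    gcongr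
    exact le_self_pow₀ one_le_two (by omega)
  have hmoment : 0 ≤ ∫ xs, cubeCovRad d xs ^ p ∂(Measure.pi fun _ : Fin N => uniformCube d) :=
    integral_nonneg fun xs => Real.rpow_nonneg (coveringRadius_nonneg (unitCube d) xs) p
  rw [one_div p, Real.rpow_inv_le_iff_of_pos hmoment (by positivity) (by positivity)]
  convert integral_cubeCovRad_rpow_le hd hN hp (by positivity) hside using 2
  ring
end

section
/- Let Φ : X → ℝ be bounded measurable with (P^a Φ)(x) = 0 for all a ∈ A and x ∈ X (a martingale function). If a bounded measurable V^{up} : X → ℝ satisfies V^{up}(x) = ∫_Ξ max_{a∈A} { r^a(x) + γ ( V^{up}(ψ(x,a,ξ)) − Φ(ψ(x,a,ξ)) ) } P_ξ(dξ) for all x ∈ X, then V^{up} is an upper solution to the Bellman optimality equation: V^{up}(x) ≥ max_{a∈A} { r^a(x) + γ (P^a V^{up})(x) } for all x ∈ X. -/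
open MeasureTheory

section IntegralSupremum

variable {Ω ι : Type*} [MeasurableSpace Ω] {μ : Measure Ω} [Finite ι] [Nonempty ι]

lemma integrable_iSup_of_finite {f : ι → Ω → ℝ} (hf : ∀ i, Integrable (f i) μ) :
    Integrable (fun ω => ⨆ i, f i ω) μ := by
  have := Fintype.ofFinite ι
  have hsup : Integrable (Finset.univ.sup' Finset.univ_nonempty f) μ :=
    Finset.sup'_induction (p := (Integrable · μ)) _ _ (fun _ hg _ hh => hg.sup hh) fun i _ => hf i
  simpa only [← Finset.sup'_univ_eq_ciSup, ← Finset.sup'_apply] using hsup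

lemma iSup_integral_le_integral_iSup {f : ι → Ω → ℝ} (hf : ∀ i, Integrable (f i) μ) :
    ⨆ i, ∫ ω, f i ω ∂μ ≤ ∫ ω, ⨆ i, f i ω ∂μ :=
  ciSup_le fun i => integral_mono (hf i) (integrable_iSup_of_finite hf) fun ω =>
    le_ciSup (f := (f · ω)) (Set.finite_range _).bddAbove i

end IntegralSupremum

lemma integral_const_add_mul_sub_of_integral_eq_zero {Ω : Type*} [MeasurableSpace Ω]
    {μ : Measure Ω} [IsProbabilityMeasure μ] {f g : Ω → ℝ} (hf : Integrable f μ)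
    (hg : Integrable g μ) (hg_zero : ∫ ω, g ω ∂μ = 0) (c γ : ℝ) :
    ∫ ω, (c + γ * (f ω - g ω)) ∂μ = c + γ * ∫ ω, f ω ∂μ := by
  have hdiff : Integrable (fun ω => γ * (f ω - g ω)) μ := (hf.sub hg).const_mul γ
  rw [integral_add (integrable_const c) hdiff, integral_const, probReal_univ, one_smul,
    integral_const_mul, integral_sub hf hg, hg_zero, sub_zero]

lemma integrable_comp_of_bounded {X Ξ : Type*} [MeasurableSpace X] [MeasurableSpace Ξ]
    {P : Measure Ξ} [IsFiniteMeasure P] {f : X → ℝ} (hf : Measurable f)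
    (hf_bdd : ∃ B : ℝ, ∀ x, |f x| ≤ B) {φ : Ξ → X} (hφ : Measurable φ) :
    Integrable (fun ξ => f (φ ξ)) P := by
  obtain ⟨B, hB⟩ := hf_bdd
  exact .of_bound (hf.comp hφ).aestronglyMeasurable B (.of_forall fun ξ => hB (φ ξ))

theorem stmt_9_general {X A Ξ : Type*} [Finite A] [Nonempty A] [MeasurableSpace Ξ]
    (P : Measure Ξ) [IsProbabilityMeasure P] (ψ : X → A → Ξ → X) (r : A → X → ℝ) (γ : ℝ)
    (Φ : X → ℝ) (hΦ_int : ∀ a x, Integrable (fun ξ => Φ (ψ x a ξ)) P)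
    (hΦ_mart : ∀ a x, ∫ ξ, Φ (ψ x a ξ) ∂P = 0)
    (Vup : X → ℝ) (hV_int : ∀ a x, Integrable (fun ξ => Vup (ψ x a ξ)) P)
    (hsuper : ∀ x,
      ∫ ξ, (⨆ a : A, (r a x + γ * (Vup (ψ x a ξ) - Φ (ψ x a ξ)))) ∂P ≤ Vup x) (x : X) :
    (⨆ a : A, (r a x + γ * ∫ ξ, Vup (ψ x a ξ) ∂P)) ≤ Vup x := by
  have hint (a : A) : Integrable (fun ξ => r a x + γ * (Vup (ψ x a ξ) - Φ (ψ x a ξ))) P :=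
    (integrable_const (r a x)).add (((hV_int a x).sub (hΦ_int a x)).const_mul γ)
  calc ⨆ a, (r a x + γ * ∫ ξ, Vup (ψ x a ξ) ∂P)
      = ⨆ a, ∫ ξ, (r a x + γ * (Vup (ψ x a ξ) - Φ (ψ x a ξ))) ∂P :=
        iSup_congr fun a => (integral_const_add_mul_sub_of_integral_eq_zero
          (hV_int a x) (hΦ_int a x) (hΦ_mart a x) (r a x) γ).symm
    _ ≤ ∫ ξ, (⨆ a, (r a x + γ * (Vup (ψ x a ξ) - Φ (ψ x a ξ)))) ∂P :=
        iSup_integral_le_integral_iSup hint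
    _ ≤ Vup x := hsuper x

/-- if `V^up` solves the fixed-point equation
`V^up(x) = ∫ max_a { r^a(x) + γ (V^up(ψ(x,a,ξ)) - Φ(ψ(x,a,ξ))) } dP_ξ`
for a bounded measurable martingale function `Φ` (i.e. `P^a Φ = 0`), then `V^up` is an
upper solution to the Bellman optimality equation. -/
theorem stmt_9 {X A Ξ : Type*} [MeasurableSpace X] [MeasurableSpace A]
    [Fintype A] [Nonempty A] [MeasurableSpace Ξ]
    (P : Measure Ξ) [IsProbabilityMeasure P]
    (ψ : X → A → Ξ → X)
    (hψ : Measurable fun p : (X × A) × Ξ => ψ p.1.1 p.1.2 p.2)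
    (r : A → X → ℝ) (hr_meas : ∀ a, Measurable (r a))
    (hr_bdd : ∀ a, ∃ B : ℝ, ∀ x, |r a x| ≤ B)
    (γ : ℝ) (hγ0 : 0 < γ) (hγ1 : γ < 1)
    (Φ : X → ℝ) (hΦ_meas : Measurable Φ) (hΦ_bdd : ∃ B : ℝ, ∀ x, |Φ x| ≤ B)
    (hΦ_mart : ∀ a x, ∫ ξ, Φ (ψ x a ξ) ∂P = 0)
    (Vup : X → ℝ) (hV_meas : Measurable Vup) (hV_bdd : ∃ B : ℝ, ∀ x, |Vup x| ≤ B)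
    (hfix : ∀ x, Vup x =
      ∫ ξ, (⨆ a : A, (r a x + γ * (Vup (ψ x a ξ) - Φ (ψ x a ξ)))) ∂P) :
    ∀ x, (⨆ a : A, (r a x + γ * ∫ ξ, Vup (ψ x a ξ) ∂P)) ≤ Vup x := by
  have hψ_meas (a : A) (x : X) : Measurable (ψ x a) :=
    hψ.comp (measurable_prodMk_left (x := (x, a)))
  exact stmt_9_general P ψ r γ Φ
    (fun a x => integrable_comp_of_bounded hΦ_meas hΦ_bdd (hψ_meas a x)) hΦ_mart
    Vup (fun a x => integrable_comp_of_bounded hV_meas hV_bdd (hψ_meas a x)) fun x => (hfix x).ge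
end

section
/- Let Φ : X × A × X → ℝ be bounded measurable with ∫_Ξ Φ(x, a, ψ(x,a,ξ)) P_ξ(dξ) = 0 for all x ∈ X and a ∈ A, and define the iterates V_{k+1}(x) = ∫_Ξ max_{a∈A} { r^a(x) + γ ( V_k(ψ(x,a,ξ)) − Φ(x, a, ψ(x,a,ξ)) ) } P_ξ(dξ). If V_0 is bounded measurable with V_0(x) ≥ V*(x) for all x ∈ X, then V_k(x) ≥ V*(x) for all x ∈ X and all k ∈ ℕ. -/
open MeasureTheory

/-!
The penalized operator `T̂` (maximum inside the expectation) dominates the Bellman operator `T`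
(maximum outside): for each fixed action the penalty has non-positive mean, so inserting it can
only increase the expected payoff, and a supremum of expectations is at most the expectation of the
supremum. As `T̂` is also monotone, `U ≤ T U` and `U ≤ V` give `U ≤ T U ≤ T̂ U ≤ T̂ V`, and
induction propagates the bound along the iterates.
-/

theorem integral_le_integral_ciSup {ι Ω : Type*} [MeasurableSpace Ω] {μ : Measure Ω}
    {f : ι → Ω → ℝ} {i : ι} (hf : Integrable (f i) μ) (hsup : Integrable (fun ω => ⨆ j, f j ω) μ)
    (hbdd : ∀ᵐ ω ∂μ, BddAbove (Set.range fun j => f j ω)) :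
    ∫ ω, f i ω ∂μ ≤ ∫ ω, ⨆ j, f j ω ∂μ :=
  integral_mono_ae hf hsup (hbdd.mono fun _ hω => le_ciSup hω i)

theorem abs_ciSup_le {ι : Type*} [Nonempty ι] {f : ι → ℝ} {B : ℝ} (hf : ∀ i, |f i| ≤ B) :
    |⨆ i, f i| ≤ B := by
  have hbdd : BddAbove (Set.range f) := ⟨B, Set.forall_mem_range.2 fun i => (abs_le.1 (hf i)).2⟩
  have lower : -B ≤ ⨆ i, f i :=
    let i := Classical.arbitrary ι
    le_ciSup_of_le hbdd i (abs_le.1 (hf i)).1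
  exact abs_le.2 ⟨lower, ciSup_le fun i => (abs_le.1 (hf i)).2⟩

/-- Bounded measurable real functions, the class on which the Bellman operators act. -/
structure IsBoundedMeasurable {α : Type*} [MeasurableSpace α] (f : α → ℝ) : Prop where
  measurable : Measurable f
  bounded : ∃ B, ∀ x, |f x| ≤ B

/-- Families of measurable real functions with a common bound. Measurability is only required of
each member, so that the index type needs no measurable structure. -/
structure IsBoundedMeasurableFamily {ι α : Type*} [MeasurableSpace α] (f : ι → α → ℝ) : Prop where
  measurable : ∀ i, Measurable (f i)
  bounded : ∃ B, ∀ i x, |f i x| ≤ B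

namespace IsBoundedMeasurable

variable {α β : Type*} [MeasurableSpace α] [MeasurableSpace β]

theorem integrable {f : α → ℝ} (hf : IsBoundedMeasurable f) (μ : Measure α) [IsFiniteMeasure μ] :
    Integrable f μ :=
  let ⟨B, hB⟩ := hf.bounded
  .of_bound hf.measurable.aestronglyMeasurable B (.of_forall hB)

theorem comp {f : β → ℝ} (hf : IsBoundedMeasurable f) {g : α → β} (hg : Measurable g) :
    IsBoundedMeasurable (f ∘ g) :=
  let ⟨B, hB⟩ := hf.bounded
  ⟨hf.measurable.comp hg, B, fun x => hB (g x)⟩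

theorem integral_prod_right {f : α × β → ℝ} (hf : IsBoundedMeasurable f) (μ : Measure β)
    [IsFiniteMeasure μ] : IsBoundedMeasurable fun x => ∫ y, f (x, y) ∂μ := by
  obtain ⟨B, hB⟩ := hf.bounded
  refine ⟨hf.measurable.stronglyMeasurable.integral_prod_right'.measurable, B * μ.real Set.univ,
    fun x => ?_⟩
  rw [← Real.norm_eq_abs]
  exact norm_integral_le_of_norm_le_const (.of_forall fun y => hB (x, y))

end IsBoundedMeasurable

namespace IsBoundedMeasurableFamily

variable {ι α β : Type*} [MeasurableSpace α] [MeasurableSpace β]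

theorem of_finite [Finite ι] {f : ι → α → ℝ} (hf : ∀ i, IsBoundedMeasurable (f i)) :
    IsBoundedMeasurableFamily f := by
  choose B hB using fun i => (hf i).bounded
  exact ⟨fun i => (hf i).measurable, ⨆ i, B i,
    fun i x => (hB i x).trans (le_ciSup (Set.finite_range B).bddAbove i)⟩

variable {f : ι → α → ℝ}

theorem isBoundedMeasurable (hf : IsBoundedMeasurableFamily f) (i : ι) :
    IsBoundedMeasurable (f i) :=
  let ⟨B, hB⟩ := hf.bounded
  ⟨hf.measurable i, B, hB i⟩

theorem comp (hf : IsBoundedMeasurableFamily f) {g : β → α} (hg : Measurable g) :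
    IsBoundedMeasurableFamily fun i => f i ∘ g :=
  let ⟨B, hB⟩ := hf.bounded
  ⟨fun i => (hf.measurable i).comp hg, B, fun i x => hB i (g x)⟩

theorem bddAbove_range (hf : IsBoundedMeasurableFamily f) (x : α) :
    BddAbove (Set.range fun i => f i x) :=
  let ⟨B, hB⟩ := hf.bounded
  ⟨B, Set.forall_mem_range.2 fun i => (abs_le.1 (hB i x)).2⟩

theorem iSup [Countable ι] [Nonempty ι] (hf : IsBoundedMeasurableFamily f) :
    IsBoundedMeasurable fun x => ⨆ i, f i x :=
  let ⟨B, hB⟩ := hf.bounded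
  ⟨.iSup hf.measurable, B, fun x => abs_ciSup_le fun i => hB i x⟩

end IsBoundedMeasurableFamily

section Bellman

variable {X A Ξ : Type*}

/-- The Bellman optimality operator
`(T V)(x) = sup_a { r^a(x) + γ E[V(ψ(x, a, ξ))] }`. -/
noncomputable def bellmanOp [MeasurableSpace Ξ] (P : Measure Ξ) (ψ : X → A → Ξ → X)
    (r : A → X → ℝ) (γ : ℝ) (V : X → ℝ) (x : X) : ℝ :=
  ⨆ a, (r a x + γ * ∫ ξ, V (ψ x a ξ) ∂P)

/-- The realized one-step payoff of action `a` at the state-noise pair `p = (x, ξ)`, corrected by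
the penalty `M x a ξ`; the penalty `Φ(x, a, ψ(x, a, ξ))` is the case where `M` depends on the noise
only through the next state. -/
def penalizedPayoff (ψ : X → A → Ξ → X) (r : A → X → ℝ) (γ : ℝ) (M : X → A → Ξ → ℝ) (V : X → ℝ)
    (a : A) (p : X × Ξ) : ℝ :=
  r a p.1 + γ * (V (ψ p.1 a p.2) - M p.1 a p.2)

/-- The operator `V_k ↦ V_{k+1}` of the penalized iteration, in which the action is chosen after the
noise is revealed. -/
noncomputable def penalizedBellmanOp [MeasurableSpace Ξ] (P : Measure Ξ) (ψ : X → A → Ξ → X)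
    (r : A → X → ℝ) (γ : ℝ) (M : X → A → Ξ → ℝ) (V : X → ℝ) (x : X) : ℝ :=
  ∫ ξ, ⨆ a, penalizedPayoff ψ r γ M V a (x, ξ) ∂P

variable {ψ : X → A → Ξ → X} {r : A → X → ℝ} {γ : ℝ} {M : X → A → Ξ → ℝ} {U V : X → ℝ}

theorem penalizedPayoff_mono (hγ : 0 ≤ γ) (hUV : U ≤ V) (a : A) (p : X × Ξ) :
    penalizedPayoff ψ r γ M U a p ≤ penalizedPayoff ψ r γ M V a p := by
  unfold penalizedPayoff
  gcongr
  exact hUV _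

theorem le_integral_penalizedPayoff [MeasurableSpace Ξ] {P : Measure Ξ} [IsProbabilityMeasure P]
    {x : X} {a : A} (hγ : 0 ≤ γ) (hV : Integrable (fun ξ => V (ψ x a ξ)) P)
    (hM : Integrable (M x a) P) (hM_mean : ∫ ξ, M x a ξ ∂P ≤ 0) :
    r a x + γ * ∫ ξ, V (ψ x a ξ) ∂P ≤ ∫ ξ, penalizedPayoff ψ r γ M V a (x, ξ) ∂P :=
  calc r a x + γ * ∫ ξ, V (ψ x a ξ) ∂P
      ≤ r a x + γ * (∫ ξ, V (ψ x a ξ) ∂P - ∫ ξ, M x a ξ ∂P) := by gcongr; linarith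
    _ = ∫ ξ, penalizedPayoff ψ r γ M V a (x, ξ) ∂P := by
      have hdiff : Integrable (fun ξ => V (ψ x a ξ) - M x a ξ) P := hV.sub hM
      simp only [penalizedPayoff]
      rw [integral_add (integrable_const _) (hdiff.const_mul γ), integral_const_mul,
        integral_sub hV hM, integral_const, probReal_univ, one_smul]

variable [MeasurableSpace X] [MeasurableSpace Ξ]

theorem isBoundedMeasurableFamily_penalizedPayoff
    (hψ : ∀ a, Measurable fun p : X × Ξ => ψ p.1 a p.2) (hr : IsBoundedMeasurableFamily r)
    (hM : IsBoundedMeasurableFamily fun a (p : X × Ξ) => M p.1 a p.2)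
    (hV : IsBoundedMeasurable V) : IsBoundedMeasurableFamily (penalizedPayoff ψ r γ M V) := by
  obtain ⟨Br, hBr⟩ := hr.bounded
  obtain ⟨BM, hBM⟩ := hM.bounded
  obtain ⟨BV, hBV⟩ := hV.bounded
  refine ⟨fun a => ((hr.measurable a).comp measurable_fst).add
    (((hV.measurable.comp (hψ a)).sub (hM.measurable a)).const_mul γ),
    Br + |γ| * (BV + BM), fun a p => ?_⟩
  calc |penalizedPayoff ψ r γ M V a p|
      ≤ |r a p.1| + |γ * (V (ψ p.1 a p.2) - M p.1 a p.2)| := abs_add_le _ _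
    _ = |r a p.1| + |γ| * |V (ψ p.1 a p.2) - M p.1 a p.2| := by rw [abs_mul]
    _ ≤ |r a p.1| + |γ| * (|V (ψ p.1 a p.2)| + |M p.1 a p.2|) := by gcongr; exact abs_sub _ _
    _ ≤ Br + |γ| * (BV + BM) := by gcongr; exacts [hBr _ _, hBV _, hBM a p]

variable {P : Measure Ξ} [Countable A] [Nonempty A]

theorem IsBoundedMeasurable.penalizedBellmanOp [IsFiniteMeasure P]
    (hψ : ∀ a, Measurable fun p : X × Ξ => ψ p.1 a p.2) (hr : IsBoundedMeasurableFamily r)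
    (hM : IsBoundedMeasurableFamily fun a (p : X × Ξ) => M p.1 a p.2)
    (hV : IsBoundedMeasurable V) : IsBoundedMeasurable (penalizedBellmanOp P ψ r γ M V) :=
  (isBoundedMeasurableFamily_penalizedPayoff hψ hr hM hV).iSup.integral_prod_right P

theorem penalizedBellmanOp_mono [IsFiniteMeasure P]
    (hψ : ∀ a, Measurable fun p : X × Ξ => ψ p.1 a p.2) (hr : IsBoundedMeasurableFamily r)
    (hγ : 0 ≤ γ) (hM : IsBoundedMeasurableFamily fun a (p : X × Ξ) => M p.1 a p.2)
    (hU : IsBoundedMeasurable U) (hV : IsBoundedMeasurable V) (hUV : U ≤ V) :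
    penalizedBellmanOp P ψ r γ M U ≤ penalizedBellmanOp P ψ r γ M V := by
  intro x
  have payoffU := isBoundedMeasurableFamily_penalizedPayoff (γ := γ) hψ hr hM hU
  have payoffV := isBoundedMeasurableFamily_penalizedPayoff (γ := γ) hψ hr hM hV
  exact integral_mono ((payoffU.iSup.comp measurable_prodMk_left).integrable P)
    ((payoffV.iSup.comp measurable_prodMk_left).integrable P)
    fun ξ => ciSup_mono (payoffV.bddAbove_range (x, ξ)) fun a => penalizedPayoff_mono hγ hUV a _

variable [IsProbabilityMeasure P]

theorem bellmanOp_le_penalizedBellmanOp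
    (hψ : ∀ a, Measurable fun p : X × Ξ => ψ p.1 a p.2) (hr : IsBoundedMeasurableFamily r)
    (hγ : 0 ≤ γ) (hM : IsBoundedMeasurableFamily fun a (p : X × Ξ) => M p.1 a p.2)
    (hM_mean : ∀ x a, ∫ ξ, M x a ξ ∂P ≤ 0) (hV : IsBoundedMeasurable V) :
    bellmanOp P ψ r γ V ≤ penalizedBellmanOp P ψ r γ M V := by
  intro x
  have payoff : IsBoundedMeasurableFamily fun a ξ => penalizedPayoff ψ r γ M V a (x, ξ) :=
    (isBoundedMeasurableFamily_penalizedPayoff hψ hr hM hV).comp measurable_prodMk_left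
  have hV_int (a : A) : Integrable (fun ξ => V (ψ x a ξ)) P :=
    (hV.comp ((hψ a).comp measurable_prodMk_left)).integrable P
  have hM_int (a : A) : Integrable (M x a) P :=
    ((hM.comp measurable_prodMk_left).isBoundedMeasurable a).integrable P
  refine ciSup_le fun a => ?_
  calc r a x + γ * ∫ ξ, V (ψ x a ξ) ∂P
      ≤ ∫ ξ, penalizedPayoff ψ r γ M V a (x, ξ) ∂P :=
        le_integral_penalizedPayoff hγ (hV_int a) (hM_int a) (hM_mean x a)
    _ ≤ penalizedBellmanOp P ψ r γ M V x :=
        integral_le_integral_ciSup ((payoff.isBoundedMeasurable a).integrable P)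
          (payoff.iSup.integrable P) (.of_forall payoff.bddAbove_range)

theorem stmt_11_general
    (hψ : ∀ a, Measurable fun p : X × Ξ => ψ p.1 a p.2) (hr : IsBoundedMeasurableFamily r)
    (hγ : 0 ≤ γ) (hU : IsBoundedMeasurable U) (hU_sub : U ≤ bellmanOp P ψ r γ U)
    (hM : IsBoundedMeasurableFamily fun a (p : X × Ξ) => M p.1 a p.2)
    (hM_mean : ∀ x a, ∫ ξ, M x a ξ ∂P ≤ 0) {Vseq : ℕ → X → ℝ}
    (hV0 : IsBoundedMeasurable (Vseq 0))
    (hrec : ∀ k, Vseq (k + 1) = penalizedBellmanOp P ψ r γ M (Vseq k)) (h0 : U ≤ Vseq 0) (k : ℕ) :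
    U ≤ Vseq k := by
  have hV (k : ℕ) : IsBoundedMeasurable (Vseq k) := by
    induction k with
    | zero => exact hV0
    | succ k ih => exact hrec k ▸ ih.penalizedBellmanOp hψ hr hM
  induction k with
  | zero => exact h0
  | succ k ih =>
    calc U ≤ bellmanOp P ψ r γ U := hU_sub
      _ ≤ penalizedBellmanOp P ψ r γ M U := bellmanOp_le_penalizedBellmanOp hψ hr hγ hM hM_mean hU
      _ ≤ penalizedBellmanOp P ψ r γ M (Vseq k) :=
        penalizedBellmanOp_mono hψ hr hγ hM hU (hV k) ih
      _ = Vseq (k + 1) := (hrec k).symm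

end Bellman

/-- the iterates `V_{k+1}(x) = ∫ max_a { r^a(x) + γ (V_k(ψ(x,a,ξ)) -
Φ(x,a,ψ(x,a,ξ))) } dP_ξ` with a martingale function `Φ` stay above the optimal value
function `V*` provided `V_0 ≥ V*`. -/
theorem stmt_11 {X A Ξ : Type*} [MeasurableSpace X] [MeasurableSpace A]
    [Fintype A] [Nonempty A] [MeasurableSpace Ξ]
    (P : Measure Ξ) [IsProbabilityMeasure P]
    (ψ : X → A → Ξ → X)
    (hψ : Measurable fun p : (X × A) × Ξ => ψ p.1.1 p.1.2 p.2)
    (r : A → X → ℝ) (hr_meas : ∀ a, Measurable (r a))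
    (hr_bdd : ∀ a, ∃ B : ℝ, ∀ x, |r a x| ≤ B)
    (γ : ℝ) (hγ0 : 0 < γ) (hγ1 : γ < 1)
    (Vstar : X → ℝ) (hVstar_meas : Measurable Vstar)
    (hVstar_bdd : ∃ B : ℝ, ∀ x, |Vstar x| ≤ B)
    (hVstar_fix : ∀ x, Vstar x = ⨆ a : A, (r a x + γ * ∫ ξ, Vstar (ψ x a ξ) ∂P))
    (Φ : X → A → X → ℝ)
    (hΦ_meas : Measurable fun p : (X × A) × X => Φ p.1.1 p.1.2 p.2)
    (hΦ_bdd : ∃ B : ℝ, ∀ x a y, |Φ x a y| ≤ B)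
    (hΦ_mart : ∀ x a, ∫ ξ, Φ x a (ψ x a ξ) ∂P = 0)
    (Vseq : ℕ → X → ℝ)
    (hV0_meas : Measurable (Vseq 0)) (hV0_bdd : ∃ B : ℝ, ∀ x, |Vseq 0 x| ≤ B)
    (hrec : ∀ k x, Vseq (k + 1) x =
      ∫ ξ, (⨆ a : A, (r a x + γ * (Vseq k (ψ x a ξ) - Φ x a (ψ x a ξ)))) ∂P)
    (h0 : ∀ x, Vstar x ≤ Vseq 0 x) :
    ∀ k x, Vstar x ≤ Vseq k x := by
  have hψ_section (a : A) : Measurable fun p : X × Ξ => ψ p.1 a p.2 :=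
    hψ.comp (f := fun p : X × Ξ => ((p.1, a), p.2)) (by fun_prop)
  have hΦ_family : IsBoundedMeasurableFamily fun a (p : X × Ξ) => Φ p.1 a (ψ p.1 a p.2) :=
    let ⟨B, hB⟩ := hΦ_bdd
    ⟨fun a => hΦ_meas.comp ((measurable_fst.prodMk measurable_const).prodMk (hψ_section a)),
      B, fun a p => hB p.1 a _⟩
  exact stmt_11_general hψ_section (.of_finite fun a => ⟨hr_meas a, hr_bdd a⟩) hγ0.le
    ⟨hVstar_meas, hVstar_bdd⟩ (fun x => (hVstar_fix x).le) hΦ_family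
    (fun x a => (hΦ_mart x a).le) ⟨hV0_meas, hV0_bdd⟩ (fun k => funext (hrec k)) h0
end

section
/- The UVIP iterates satisfy the supremum-norm recursion ‖V_{k+1}^{up} − V*‖_∞ ≤ γ ‖V_k^{up} − V*‖_∞ + 2γ ‖V^π − V*‖_∞ for every k ∈ ℕ. -/
open MeasureTheory

/-!
Compare one UVIP step applied to `U` with one Bellman step applied to `V`, for fixed noise `ξ`. Up
to the factor `γ`, the terms maximised over `a` differ by `(U - V) - (W - V)` at the next state plus
`P^a (W - V)`, where `W` is the control variate; this is at most `‖U - V‖ + 2 ‖W - V‖`, uniformly in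
`a` and `ξ`. Suprema and averages over a probability measure preserve such bounds, and `V = V*` is
fixed by the Bellman operator. The iterates stay bounded because each step keeps them at bounded
distance from the bounded function `V*`.
-/

theorem abs_iSup_sub_iSup_le {ι : Type*} [Nonempty ι] {f g : ι → ℝ} {c : ℝ}
    (hg : BddAbove (Set.range g)) (h : ∀ i, |f i - g i| ≤ c) :
    |(⨆ i, f i) - ⨆ i, g i| ≤ c := by
  have f_le_iSup_add : ∀ i, f i ≤ (⨆ j, g j) + c := fun i => by
    linarith [le_ciSup hg i, (abs_le.1 (h i)).2]
  have hf : BddAbove (Set.range f) := ⟨_, Set.forall_mem_range.2 f_le_iSup_add⟩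
  have g_le_iSup_add : ∀ i, g i ≤ (⨆ j, f j) + c := fun i => by
    linarith [le_ciSup hf i, (abs_le.1 (h i)).1]
  rw [abs_sub_le_iff, sub_le_iff_le_add', sub_le_iff_le_add']
  exact ⟨ciSup_le f_le_iSup_add, ciSup_le g_le_iSup_add⟩

theorem norm_integral_sub_integral_le_of_norm_sub_le {Ω E : Type*} [MeasurableSpace Ω]
    [NormedAddCommGroup E] [NormedSpace ℝ E] {μ : Measure Ω} [IsFiniteMeasure μ] {f g : Ω → E}
    {c : ℝ} (hf : Integrable f μ) (hg : Integrable g μ) (h : ∀ᵐ ω ∂μ, ‖f ω - g ω‖ ≤ c) :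
    ‖∫ ω, f ω ∂μ - ∫ ω, g ω ∂μ‖ ≤ c * μ.real Set.univ := by
  rw [← integral_sub hf hg]
  exact norm_integral_le_of_norm_le_const h

/-- The bounded measurable real functions, the class in which all value functions live. -/
structure IsBoundedMeasurable_s12 {X : Type*} [MeasurableSpace X] (V : X → ℝ) : Prop where
  measurable : Measurable V
  exists_abs_le : ∃ B : ℝ, ∀ x, |V x| ≤ B

namespace IsBoundedMeasurable_s12

variable {X Ω : Type*} [MeasurableSpace X] [MeasurableSpace Ω] {V W : X → ℝ}

theorem integrable_comp (hV : IsBoundedMeasurable_s12 V) {μ : Measure Ω} [IsFiniteMeasure μ]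
    {φ : Ω → X} (hφ : Measurable φ) : Integrable (fun ω => V (φ ω)) μ := by
  obtain ⟨B, hB⟩ := hV.exists_abs_le
  exact .of_bound (hV.measurable.comp hφ).aestronglyMeasurable B (.of_forall fun ω => hB (φ ω))

theorem bddAbove_range_abs_sub (hV : IsBoundedMeasurable_s12 V) (hW : IsBoundedMeasurable_s12 W) :
    BddAbove (Set.range fun x => |V x - W x|) := by
  obtain ⟨B, hB⟩ := hV.exists_abs_le
  obtain ⟨C, hC⟩ := hW.exists_abs_le
  exact ⟨B + C, Set.forall_mem_range.2 fun x => (abs_sub _ _).trans (add_le_add (hB x) (hC x))⟩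

theorem of_abs_sub_le (hV : IsBoundedMeasurable_s12 V) (hW : Measurable W) {c : ℝ}
    (h : ∀ x, |W x - V x| ≤ c) : IsBoundedMeasurable_s12 W := by
  obtain ⟨B, hB⟩ := hV.exists_abs_le
  exact ⟨hW, c + B, fun x => by linarith [abs_sub_abs_le_abs_sub (W x) (V x), h x, hB x]⟩

end IsBoundedMeasurable_s12

section Operators

variable {X A Ξ : Type*} [MeasurableSpace Ξ]

/-- The transition operator `P^a`: the expectation of `V` at the state reached from `x` under the
action `a`. -/
noncomputable def transitionMean (P : Measure Ξ) (ψ : X → A → Ξ → X) (a : A) (V : X → ℝ)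
    (x : X) : ℝ :=
  ∫ ξ, V (ψ x a ξ) ∂P

/-- The Bellman optimality operator `T`. The maximum over actions is encoded as a real supremum, so
that the action space may be infinite; it is `0` by convention if the family is unbounded above. -/
noncomputable def bellmanOperator (P : Measure Ξ) (ψ : X → A → Ξ → X) (r : A → X → ℝ) (γ : ℝ)
    (V : X → ℝ) (x : X) : ℝ :=
  ⨆ a, (r a x + γ * transitionMean P ψ a V x)

/-- The value of the UVIP maximisation at the state `x` once the noise `ξ` is revealed, for the
current iterate `U` and the control variate `W` (the paper's `V^π`). -/
noncomputable def uvipIntegrand (P : Measure Ξ) (ψ : X → A → Ξ → X) (r : A → X → ℝ) (γ : ℝ)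
    (W U : X → ℝ) (x : X) (ξ : Ξ) : ℝ :=
  ⨆ a, (r a x + γ * (U (ψ x a ξ) - W (ψ x a ξ) + transitionMean P ψ a W x))

/-- The UVIP operator with control variate `W`, mapping the iterate `V_k^up` to `V_{k+1}^up`. -/
noncomputable def uvipOperator (P : Measure Ξ) (ψ : X → A → Ξ → X) (r : A → X → ℝ) (γ : ℝ)
    (W U : X → ℝ) (x : X) : ℝ :=
  ∫ ξ, uvipIntegrand P ψ r γ W U x ξ ∂P

variable {P : Measure Ξ} {ψ : X → A → Ξ → X} {r : A → X → ℝ} {γ : ℝ} {U V W : X → ℝ}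

theorem bddAbove_range_reward_add_transitionMean [IsFiniteMeasure P] {x : X}
    (hr : BddAbove (Set.range fun a => r a x)) (hγ : 0 ≤ γ) {B : ℝ} (hB : ∀ y, |V y| ≤ B) :
    BddAbove (Set.range fun a => r a x + γ * transitionMean P ψ a V x) := by
  obtain ⟨R, hR⟩ := hr
  refine ⟨R + γ * (B * P.real Set.univ), Set.forall_mem_range.2 fun a => ?_⟩
  have mean_le : |transitionMean P ψ a V x| ≤ B * P.real Set.univ :=
    norm_integral_le_of_norm_le_const (f := fun ξ => V (ψ x a ξ)) (.of_forall fun ξ => hB (ψ x a ξ))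
  gcongr
  · exact hR ⟨a, rfl⟩
  · exact (le_abs_self _).trans mean_le

variable [MeasurableSpace X]

section Measurability

variable [SFinite P] (hψ : ∀ a, Measurable fun p : X × Ξ => ψ p.1 a p.2)
include hψ

theorem measurable_transitionMean (a : A) (hV : Measurable V) :
    Measurable (transitionMean P ψ a V) :=
  (hV.comp (hψ a)).stronglyMeasurable.integral_prod_right'.measurable

theorem measurable_uvipIntegrand [Countable A] (hr : ∀ a, Measurable (r a)) (hW : Measurable W)
    (hU : Measurable U) : Measurable fun p : X × Ξ => uvipIntegrand P ψ r γ W U p.1 p.2 := by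
  refine Measurable.iSup fun a => ?_
  have hψa := hψ a
  have hmean : Measurable (transitionMean P ψ a W) := measurable_transitionMean hψ a hW
  fun_prop

theorem measurable_uvipOperator [Countable A] (hr : ∀ a, Measurable (r a)) (hW : Measurable W)
    (hU : Measurable U) : Measurable (uvipOperator P ψ r γ W U) :=
  (measurable_uvipIntegrand hψ hr hW hU).stronglyMeasurable.integral_prod_right'.measurable

end Measurability

section Bounds

variable [IsProbabilityMeasure P]

theorem abs_transitionMean_sub_le {x : X} {a : A} (hψ : Measurable (ψ x a))
    (hV : IsBoundedMeasurable_s12 V) (hW : IsBoundedMeasurable_s12 W) {c : ℝ} (h : ∀ y, |W y - V y| ≤ c) :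
    |transitionMean P ψ a W x - transitionMean P ψ a V x| ≤ c := by
  simpa [transitionMean] using norm_integral_sub_integral_le_of_norm_sub_le
    (hW.integrable_comp (μ := P) hψ) (hV.integrable_comp hψ) (.of_forall fun ξ => h (ψ x a ξ))

variable [Nonempty A]

theorem abs_uvipIntegrand_sub_bellmanOperator_le {x : X} (hψ : ∀ a, Measurable (ψ x a))
    (hr : BddAbove (Set.range fun a => r a x)) (hγ : 0 ≤ γ)
    (hV : IsBoundedMeasurable_s12 V) (hW : IsBoundedMeasurable_s12 W) {c d : ℝ}
    (hUV : ∀ y, |U y - V y| ≤ c) (hWV : ∀ y, |W y - V y| ≤ d) (ξ : Ξ) :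
    |uvipIntegrand P ψ r γ W U x ξ - bellmanOperator P ψ r γ V x| ≤ γ * c + 2 * γ * d := by
  obtain ⟨B, hB⟩ := hV.exists_abs_le
  refine abs_iSup_sub_iSup_le (bddAbove_range_reward_add_transitionMean hr hγ hB) fun a => ?_
  set y := ψ x a ξ
  set w := transitionMean P ψ a W x
  set v := transitionMean P ψ a V x
  have hwv : |w - v| ≤ d := abs_transitionMean_sub_le (hψ a) hV hW hWV
  calc |r a x + γ * (U y - W y + w) - (r a x + γ * v)|
      = |γ * ((U y - V y) - (W y - V y) + (w - v))| := by ring_nf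
    _ = γ * |(U y - V y) - (W y - V y) + (w - v)| := by rw [abs_mul, abs_of_nonneg hγ]
    _ ≤ γ * (c + d + d) := by
        gcongr
        exact (abs_add_le _ _).trans
          (add_le_add ((abs_sub _ _).trans (add_le_add (hUV y) (hWV y))) hwv)
    _ = γ * c + 2 * γ * d := by ring

variable [Countable A] (hψ : ∀ a, Measurable fun p : X × Ξ => ψ p.1 a p.2)
  (hr_meas : ∀ a, Measurable (r a)) (hr_bdd : ∀ x, BddAbove (Set.range fun a => r a x))
  (hγ : 0 ≤ γ)
include hψ hr_meas hr_bdd hγ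

theorem abs_uvipOperator_sub_bellmanOperator_le (hU : Measurable U)
    (hV : IsBoundedMeasurable_s12 V) (hW : IsBoundedMeasurable_s12 W) {c d : ℝ}
    (hUV : ∀ y, |U y - V y| ≤ c) (hWV : ∀ y, |W y - V y| ≤ d) (x : X) :
    |uvipOperator P ψ r γ W U x - bellmanOperator P ψ r γ V x| ≤ γ * c + 2 * γ * d := by
  have hclose := abs_uvipIntegrand_sub_bellmanOperator_le (P := P)
    (fun a => (hψ a).comp measurable_prodMk_left) (hr_bdd x) hγ hV hW hUV hWV
  have hmeas : Measurable (uvipIntegrand P ψ r γ W U x) :=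
    (measurable_uvipIntegrand hψ hr_meas hW.measurable hU).comp measurable_prodMk_left
  have hint : Integrable (uvipIntegrand P ψ r γ W U x) P :=
    integrable_of_norm_sub_le hmeas.aestronglyMeasurable
      (integrable_const (bellmanOperator P ψ r γ V x)) (integrable_const _)
      (.of_forall fun ξ => (norm_sub_rev _ _).trans_le (hclose ξ))
  simpa [uvipOperator] using norm_integral_sub_integral_le_of_norm_sub_le hint
    (integrable_const (bellmanOperator P ψ r γ V x)) (.of_forall hclose)

theorem iSup_abs_uvipOperator_sub_bellmanOperator_le [Nonempty X] (hU : IsBoundedMeasurable_s12 U)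
    (hV : IsBoundedMeasurable_s12 V) (hW : IsBoundedMeasurable_s12 W) :
    ⨆ x, |uvipOperator P ψ r γ W U x - bellmanOperator P ψ r γ V x| ≤
      γ * (⨆ x, |U x - V x|) + 2 * γ * ⨆ x, |W x - V x| :=
  ciSup_le <| abs_uvipOperator_sub_bellmanOperator_le hψ hr_meas hr_bdd hγ hU.measurable hV hW
    (le_ciSup (hU.bddAbove_range_abs_sub hV)) (le_ciSup (hW.bddAbove_range_abs_sub hV))

theorem IsBoundedMeasurable_s12.uvipOperator (hU : IsBoundedMeasurable_s12 U) (hW : IsBoundedMeasurable_s12 W)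
    (hV : IsBoundedMeasurable_s12 V) (hfix : V = bellmanOperator P ψ r γ V) :
    IsBoundedMeasurable_s12 (uvipOperator P ψ r γ W U) := by
  obtain ⟨c, hc⟩ := hU.bddAbove_range_abs_sub hV
  obtain ⟨d, hd⟩ := hW.bddAbove_range_abs_sub hV
  refine hV.of_abs_sub_le (measurable_uvipOperator hψ hr_meas hW.measurable hU.measurable)
    (c := γ * c + 2 * γ * d) fun x => ?_
  rw [congrFun hfix x]
  exact abs_uvipOperator_sub_bellmanOperator_le hψ hr_meas hr_bdd hγ hU.measurable hV hW
    (Set.forall_mem_range.1 hc) (Set.forall_mem_range.1 hd) x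

end Bounds

end Operators

theorem stmt_12_general {X A Ξ : Type*} [MeasurableSpace X] [Nonempty X] [Countable A] [Nonempty A]
    [MeasurableSpace Ξ] (P : Measure Ξ) [IsProbabilityMeasure P] (ψ : X → A → Ξ → X)
    (hψ : ∀ a, Measurable fun p : X × Ξ => ψ p.1 a p.2)
    (r : A → X → ℝ) (hr_meas : ∀ a, Measurable (r a))
    (hr_bdd : ∀ x, BddAbove (Set.range fun a => r a x)) (γ : ℝ) (hγ : 0 ≤ γ)
    (Vstar : X → ℝ) (hVstar : IsBoundedMeasurable_s12 Vstar)
    (hVstar_fix : Vstar = bellmanOperator P ψ r γ Vstar)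
    (Vpi : X → ℝ) (hVpi : IsBoundedMeasurable_s12 Vpi)
    (Vup : ℕ → X → ℝ) (hV0 : IsBoundedMeasurable_s12 (Vup 0))
    (hrec : ∀ k, Vup (k + 1) = uvipOperator P ψ r γ Vpi (Vup k)) (k : ℕ) :
    ⨆ x, |Vup (k + 1) x - Vstar x| ≤
      γ * (⨆ x, |Vup k x - Vstar x|) + 2 * γ * ⨆ x, |Vpi x - Vstar x| := by
  have hVup : ∀ n, IsBoundedMeasurable_s12 (Vup n) := fun n => by
    induction n with
    | zero => exact hV0
    | succ n ih => exact hrec n ▸ ih.uvipOperator hψ hr_meas hr_bdd hγ hVpi hVstar hVstar_fix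
  calc ⨆ x, |Vup (k + 1) x - Vstar x|
      = ⨆ x, |uvipOperator P ψ r γ Vpi (Vup k) x - bellmanOperator P ψ r γ Vstar x| := by
        rw [hrec k, ← hVstar_fix]
    _ ≤ _ := iSup_abs_uvipOperator_sub_bellmanOperator_le hψ hr_meas hr_bdd hγ (hVup k) hVstar hVpi

/-- the UVIP iterates
`V_{k+1}^up(x) = ∫ max_a { r^a(x) + γ (V_k^up(ψ(x,a,ξ)) - V^π(ψ(x,a,ξ)) + (P^a V^π)(x)) } dP_ξ`
satisfy the sup-norm recursion
`‖V_{k+1}^up - V*‖ ≤ γ ‖V_k^up - V*‖ + 2γ ‖V^π - V*‖`. -/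
theorem stmt_12 {X A Ξ : Type*} [MeasurableSpace X] [MeasurableSpace A] [Nonempty X]
    [Fintype A] [Nonempty A] [MeasurableSpace Ξ]
    (P : Measure Ξ) [IsProbabilityMeasure P]
    (ψ : X → A → Ξ → X)
    (hψ : Measurable fun p : (X × A) × Ξ => ψ p.1.1 p.1.2 p.2)
    (r : A → X → ℝ) (hr_meas : ∀ a, Measurable (r a))
    (hr_bdd : ∀ a, ∃ B : ℝ, ∀ x, |r a x| ≤ B)
    (γ : ℝ) (hγ0 : 0 < γ) (hγ1 : γ < 1)
    (Vstar : X → ℝ) (hVstar_meas : Measurable Vstar)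
    (hVstar_bdd : ∃ B : ℝ, ∀ x, |Vstar x| ≤ B)
    (hVstar_fix : ∀ x, Vstar x = ⨆ a : A, (r a x + γ * ∫ ξ, Vstar (ψ x a ξ) ∂P))
    (Vpi : X → ℝ) (hVpi_meas : Measurable Vpi) (hVpi_bdd : ∃ B : ℝ, ∀ x, |Vpi x| ≤ B)
    (Vup : ℕ → X → ℝ)
    (hV0_meas : Measurable (Vup 0)) (hV0_bdd : ∃ B : ℝ, ∀ x, |Vup 0 x| ≤ B)
    (hrec : ∀ k x, Vup (k + 1) x =
      ∫ ξ, (⨆ a : A, (r a x +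
        γ * (Vup k (ψ x a ξ) - Vpi (ψ x a ξ) + ∫ ξ', Vpi (ψ x a ξ') ∂P))) ∂P) :
    ∀ k : ℕ, (⨆ x, |Vup (k + 1) x - Vstar x|) ≤
      γ * (⨆ x, |Vup k x - Vstar x|) + 2 * γ * ⨆ x, |Vpi x - Vstar x| :=
  stmt_12_general P ψ (fun a => hψ.comp (f := fun p : X × Ξ => ((p.1, a), p.2)) (by fun_prop)) r
    hr_meas (fun _ => (Set.finite_range _).bddAbove) γ hγ0.le Vstar ⟨hVstar_meas, hVstar_bdd⟩
    (funext hVstar_fix) Vpi ⟨hVpi_meas, hVpi_bdd⟩ Vup ⟨hV0_meas, hV0_bdd⟩ fun k => funext (hrec k)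
end
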